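/- Let 1 < p < ∞ and N > 0. There exists a constant C such that for every continuous Littlewood–Paley family (f_i)_{i∈ℤ} with band width N, every jump collection (N_k)_{k≥0}, and every λ > 0, one has ‖ λ · (#{k ≥ 1 : |Σ_{N_{k−1}(x) < i ≤ N_k(x)} f_i(x)| > λ})^{1/2} ‖_{L^p(dx)} ≤ C ‖ (Σ_{i∈ℤ} |f_i|^2)^{1/2} ‖_{L^p(ℝ)}. -/

import Mathlib

open MeasureTheory ENNReal
open scoped FourierTransform NNReal

noncomputable section

/-- A jump collection: a sequence of measurable integer-valued functions on `ℝ`,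
nondecreasing in the index. -/
def IsJumpCollection (Nk : ℕ → ℝ → ℤ) : Prop :=
  (∀ k, Measurable (Nk k)) ∧ ∀ (k : ℕ) (x : ℝ), Nk k x ≤ Nk (k + 1) x

/-- A continuous Littlewood–Paley family with band width `Nb`. -/
def IsContLPFamily (Nb : ℝ) (f : ℤ → SchwartzMap ℝ ℂ) : Prop :=
  ∀ i : ℤ, ∀ ξ : ℝ, 𝓕 (⇑(f i)) ξ ≠ 0 →
    (2 : ℝ) ^ ((i : ℝ) - Nb) < |ξ| ∧ |ξ| < (2 : ℝ) ^ ((i : ℝ) + Nb)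




/-- greedy state: current deviation and accumulated squared jumps -/
def gst (θ : ℝ) (d : ℕ → ℂ) : ℕ → ℂ × ℝ
  | 0 => (0, 0)
  | j + 1 => if θ < ‖(gst θ d j).1 + d j‖
      then (0, (gst θ d j).2 + ‖(gst θ d j).1 + d j‖ ^ 2)
      else ((gst θ d j).1 + d j, (gst θ d j).2)

def gY (θ : ℝ) (d : ℕ → ℂ) (j : ℕ) : ℝ := ‖(gst θ d j).1‖ ^ 2 + (gst θ d j).2

def gs (d : ℕ → ℂ) (j : ℕ) : ℝ := ∑ i ∈ Finset.range j, ‖d i‖ ^ 2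

lemma gst_congr (θ : ℝ) (d e : ℕ → ℂ) (j : ℕ) (h : ∀ i < j, d i = e i) :
    gst θ d j = gst θ e j := by
  induction j with
  | zero => rfl
  | succ j ih =>
    have := ih (fun i hi => h i (by omega))
    simp only [gst, this, h j (by omega)]

lemma gY_congr (θ : ℝ) (d e : ℕ → ℂ) (j : ℕ) (h : ∀ i < j, d i = e i) :
    gY θ d j = gY θ e j := by
  simp only [gY, gst_congr θ d e j h]

lemma gs_congr (d e : ℕ → ℂ) (j : ℕ) (h : ∀ i < j, ‖d i‖ = ‖e i‖) :
    gs d j = gs e j := by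
  unfold gs
  apply Finset.sum_congr rfl
  intro i hi
  rw [h i (Finset.mem_range.1 hi)]

lemma gs_nonneg (d : ℕ → ℂ) (j : ℕ) : 0 ≤ gs d j :=
  Finset.sum_nonneg fun _ _ => by positivity

lemma gs_succ (d : ℕ → ℂ) (j : ℕ) : gs d (j + 1) = gs d j + ‖d j‖ ^ 2 := by
  simp [gs, Finset.sum_range_succ]

lemma gs_mono (d : ℕ → ℂ) {i j : ℕ} (h : i ≤ j) : gs d i ≤ gs d j := by
  unfold gs
  apply Finset.sum_le_sum_of_subset_of_nonneg
  · simpa using h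
  · intros; positivity

lemma gY_zero (θ : ℝ) (d : ℕ → ℂ) : gY θ d 0 = 0 := by simp [gY, gst]

lemma gY_succ (θ : ℝ) (d : ℕ → ℂ) (j : ℕ) :
    gY θ d (j + 1) = ‖(gst θ d j).1 + d j‖ ^ 2 + (gst θ d j).2 := by
  by_cases h : θ < ‖(gst θ d j).1 + d j‖
  · simp [gY, gst, h]; ring
  · simp [gY, gst, h]

lemma gst_snd_le_succ (θ : ℝ) (d : ℕ → ℂ) (j : ℕ) : (gst θ d j).2 ≤ (gst θ d (j + 1)).2 := by
  by_cases h : θ < ‖(gst θ d j).1 + d j‖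
  · simp [gst, h]
  · simp [gst, h]

lemma gst_snd_mono (θ : ℝ) (d : ℕ → ℂ) : Monotone fun j => (gst θ d j).2 :=
  monotone_nat_of_le_succ (gst_snd_le_succ θ d)

lemma gst_snd_nonneg (θ : ℝ) (d : ℕ → ℂ) (j : ℕ) : 0 ≤ (gst θ d j).2 := by
  have := gst_snd_mono θ d (Nat.zero_le j)
  simpa [gst] using this

lemma gY_nonneg (θ : ℝ) (d : ℕ → ℂ) (j : ℕ) : 0 ≤ gY θ d j := by
  have := gst_snd_nonneg θ d j
  unfold gY; positivity

lemma gst_fst_le (θ : ℝ) (hθ : 0 ≤ θ) (d : ℕ → ℂ) (j : ℕ) : ‖(gst θ d j).1‖ ≤ θ := by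
  induction j with
  | zero => simpa [gst] using hθ
  | succ j _ =>
    by_cases h : θ < ‖(gst θ d j).1 + d j‖
    · simpa [gst, h] using hθ
    · simp only [gst, h, if_false]; exact not_lt.1 h

lemma gst_dich (θ : ℝ) (hθ : 0 ≤ θ) (d : ℕ → ℂ) (a b : ℕ) (hab : a ≤ b) :
    (gst θ d a).2 + θ ^ 2 ≤ (gst θ d b).2 ∨
    (gst θ d b).1 = (gst θ d a).1 + ∑ i ∈ Finset.Ico a b, d i := by
  induction b, hab using Nat.le_induction with
  | base => right; simp
  | succ b hab ih =>
    rcases ih with ih | ih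
    · left; exact ih.trans (gst_snd_le_succ θ d b)
    · by_cases h : θ < ‖(gst θ d b).1 + d b‖
      · left
        simp only [gst, h, if_true]
        have h1 := gst_snd_mono θ d hab
        have h2 : θ ^ 2 ≤ ‖(gst θ d b).1 + d b‖ ^ 2 := by gcongr
        simp only at h1
        linarith
      · right
        simp only [gst, h, if_false]
        rw [ih, Finset.sum_Ico_succ_top hab, add_assoc]

lemma gst_jump (θ : ℝ) (hθ : 0 ≤ θ) (d : ℕ → ℂ) (a b : ℕ) (hab : a ≤ b)
    (h : 2 * θ < ‖∑ i ∈ Finset.Ico a b, d i‖) :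
    (gst θ d a).2 + θ ^ 2 ≤ (gst θ d b).2 := by
  rcases gst_dich θ hθ d a b hab with h' | h'
  · exact h'
  · exfalso
    have h1 := gst_fst_le θ hθ d a
    have h2 := gst_fst_le θ hθ d b
    have : ∑ i ∈ Finset.Ico a b, d i = (gst θ d b).1 - (gst θ d a).1 := by rw [h']; ring
    rw [this] at h
    have := norm_sub_le (gst θ d b).1 (gst θ d a).1
    linarith

/-- counting jumps -/
lemma gst_count (θ : ℝ) (hθ : 0 ≤ θ) (d : ℕ → ℂ) (n : ℕ) (ν : ℕ → ℕ) (hν : Monotone ν)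
    (hn : ∀ k, ν k ≤ n) (J : Finset ℕ)
    (h : ∀ k ∈ J, 2 * θ < ‖∑ i ∈ Finset.Ico (ν k) (ν (k + 1)), d i‖) :
    θ ^ 2 * (J.card : ℝ) ≤ gY θ d n := by
  classical
  have key : ∀ k, θ ^ 2 * ((J.filter (· < k)).card : ℝ) ≤ (gst θ d (ν k)).2 := by
    intro k
    induction k with
    | zero => simpa using gst_snd_nonneg θ d (ν 0)
    | succ k ih =>
      by_cases hk : k ∈ J
      · have e : J.filter (· < k + 1) = insert k (J.filter (· < k)) := by
          ext x; simp only [Finset.mem_filter, Finset.mem_insert]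
          constructor
          · rintro ⟨h1, h2⟩
            by_cases hx : x = k
            · exact Or.inl hx
            · exact Or.inr ⟨h1, by omega⟩
          · rintro (rfl | ⟨h1, h2⟩)
            · exact ⟨hk, by omega⟩
            · exact ⟨h1, by omega⟩
        rw [e, Finset.card_insert_of_notMem (by simp)]
        have := gst_jump θ hθ d (ν k) (ν (k + 1)) (hν (Nat.le_succ k)) (h k hk)
        push_cast
        linarith
      · have e : J.filter (· < k + 1) = J.filter (· < k) := by
          ext x; simp only [Finset.mem_filter]
          constructor
          · rintro ⟨h1, h2⟩
            refine ⟨h1, ?_⟩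
            rcases Nat.lt_succ_iff_lt_or_eq.1 h2 with h3 | h3
            · exact h3
            · exact absurd (h3 ▸ h1) hk
          · rintro ⟨h1, h2⟩; exact ⟨h1, by omega⟩
        rw [e]
        exact ih.trans (gst_snd_mono θ d (hν (Nat.le_succ k)))
  have h1 := key (J.sup id + 1)
  have e : J.filter (· < J.sup id + 1) = J := by
    apply Finset.filter_true_of_mem
    intro x hx
    have : id x ≤ J.sup id := Finset.le_sup hx
    simp only [id] at this
    omega
  rw [e] at h1
  have h2 := gst_snd_mono θ d (hn (J.sup id + 1))
  simp only at h2
  have h3 : (gst θ d n).2 ≤ gY θ d n := by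
    unfold gY
    have : 0 ≤ ‖(gst θ d n).1‖ ^ 2 := by positivity
    linarith
  linarith

/-- parallelogram -/
lemma gY_flip (θ : ℝ) (d e : ℕ → ℂ) (j : ℕ) (h : ∀ i < j, e i = d i) (hj : e j = - d j) :
    ∃ u : ℝ, u ^ 2 ≤ 4 * gY θ d j * ‖d j‖ ^ 2 ∧
      gY θ d (j + 1) = gY θ d j + ‖d j‖ ^ 2 + u ∧
      gY θ e (j + 1) = gY θ d j + ‖d j‖ ^ 2 - u := by
  refine ⟨‖(gst θ d j).1 + d j‖ ^ 2 - ‖(gst θ d j).1‖ ^ 2 - ‖d j‖ ^ 2, ?_, ?_, ?_⟩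
  · have h1 : ‖(gst θ d j).1 + d j‖ ^ 2 - ‖(gst θ d j).1‖ ^ 2 - ‖d j‖ ^ 2
        = 2 * inner ℝ (gst θ d j).1 (d j) := by
      rw [norm_add_sq_real]; ring
    rw [h1]
    have h2 := abs_real_inner_le_norm (gst θ d j).1 (d j)
    have h3 : (inner ℝ (gst θ d j).1 (d j)) ^ 2 ≤ (‖(gst θ d j).1‖ * ‖d j‖) ^ 2 := by
      rw [← sq_abs]; gcongr
    have h4 : ‖(gst θ d j).1‖ ^ 2 ≤ gY θ d j := by
      unfold gY
      have := gst_snd_nonneg θ d j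
      linarith
    have h5 : ‖(gst θ d j).1‖ ^ 2 * ‖d j‖ ^ 2 ≤ gY θ d j * ‖d j‖ ^ 2 := by gcongr
    nlinarith
  · rw [gY_succ]; unfold gY; ring
  · rw [gY_succ, gst_congr θ e d j h, hj]
    have := parallelogram_law_with_norm ℝ (gst θ d j).1 (d j)
    rw [← sub_eq_add_neg]
    unfold gY
    nlinarith



lemma el_R1 (q s δ : ℝ) (hq : 0 < q) (hq1 : q ≤ 1) (hs : 0 ≤ s) (hδ : 0 ≤ δ) :
    δ * (s + δ) ^ (q - 1) ≤ (1 / q) * ((s + δ) ^ q - s ^ q) := by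
  rcases eq_or_lt_of_le (add_nonneg hs hδ) with h | h
  · have h1 : δ = 0 := by linarith
    have h2 : s = 0 := by linarith
    simp [h1, h2]
  · have h1 : s = (s + δ) * (1 + -(δ / (s + δ))) := by field_simp; ring
    have h2 : δ / (s + δ) ≤ 1 := by rw [div_le_one h]; linarith
    have h3 : (1 + -(δ / (s + δ))) ^ q ≤ 1 + q * (-(δ / (s + δ))) :=
      rpow_one_add_le_one_add_mul_self (by linarith) hq.le hq1
    have h4 : s ^ q ≤ (s + δ) ^ q * (1 + q * (-(δ / (s + δ)))) := by
      calc s ^ q = ((s + δ) * (1 + -(δ / (s + δ)))) ^ q := by rw [← h1]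
        _ = (s + δ) ^ q * (1 + -(δ / (s + δ))) ^ q := by
          rw [Real.mul_rpow h.le (by linarith)]
        _ ≤ _ := by gcongr
    rw [Real.rpow_sub_one h.ne']
    have h5 : δ * ((s + δ) ^ q / (s + δ)) = (1 / q) * ((s + δ) ^ q * (q * (δ / (s + δ)))) := by
      field_simp
    rw [h5]
    gcongr
    linarith

/-- Bernoulli-type -/
lemma el_bern (q t : ℝ) (hq : 1 ≤ q) (ht0 : 0 ≤ t) (ht : t ≤ 1) :
    (1 + t) ^ q + (1 - t) ^ q ≤ 2 + q * (2 ^ q + q) * t ^ 2 := by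
  -- tangent line bounds
  have hA : (1 + t) ^ q ≤ 1 + q * t * (1 + t) ^ (q - 1) := by
    have h1 : 1 + q * (-(t / (1 + t))) ≤ (1 + -(t / (1 + t))) ^ q :=
      one_add_mul_self_le_rpow_one_add (by
        have : t / (1 + t) ≤ 1 := by rw [div_le_one (by linarith)]; linarith
        linarith) hq
    have h2 : 1 + -(t / (1 + t)) = (1 + t)⁻¹ := by field_simp; ring
    rw [h2, Real.inv_rpow (by linarith)] at h1
    have h3 : 0 < (1 + t) ^ q := by positivity
    have h4 : (1 + t) ^ (q - 1) = (1 + t) ^ q / (1 + t) := Real.rpow_sub_one (by linarith) q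
    rw [h4]
    have h5 := mul_le_mul_of_nonneg_left h1 h3.le
    rw [mul_inv_cancel₀ h3.ne'] at h5
    have h6 : (1 + t) ^ q * (1 + q * -(t / (1 + t))) =
      (1 + t) ^ q - q * t * ((1 + t) ^ q / (1 + t)) := by field_simp; ring
    linarith
  have hB : (1 - t) ^ q ≤ 1 - q * t * (1 - t) ^ (q - 1) := by
    rcases eq_or_lt_of_le ht with h | h
    · subst h
      rcases eq_or_lt_of_le hq with h' | h'
      · subst h'; simp
      · rw [sub_self, Real.zero_rpow (by linarith), Real.zero_rpow (by linarith)]; simp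
    · have h1 : 1 + q * (t / (1 - t)) ≤ (1 + (t / (1 - t))) ^ q :=
        one_add_mul_self_le_rpow_one_add (by
          have : 0 ≤ t / (1 - t) := div_nonneg ht0 (by linarith)
          linarith) hq
      have hne : (1 - t) ≠ 0 := by linarith
      have h2 : 1 + (t / (1 - t)) = (1 - t)⁻¹ := by field_simp; ring
      rw [h2, Real.inv_rpow (by linarith)] at h1
      have h3 : 0 < (1 - t) ^ q := Real.rpow_pos_of_pos (by linarith) q
      have h4 : (1 - t) ^ (q - 1) = (1 - t) ^ q / (1 - t) := Real.rpow_sub_one hne q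
      rw [h4]
      have h5 := mul_le_mul_of_nonneg_left h1 h3.le
      rw [mul_inv_cancel₀ h3.ne'] at h5
      have h6 : (1 - t) ^ q * (1 + q * (t / (1 - t))) =
        (1 - t) ^ q + q * t * ((1 - t) ^ q / (1 - t)) := by field_simp
      linarith
  have hC : (1 + t) ^ (q - 1) - (1 - t) ^ (q - 1) ≤ (2 ^ q + q) * t := by
    have h2q : (1 : ℝ) ≤ 2 ^ q := Real.one_le_rpow (by norm_num) (by linarith)
    have h2q' : q + 1 ≤ 2 ^ q := by
      have := one_add_mul_self_le_rpow_one_add (s := (1 : ℝ)) (by norm_num) hq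
      norm_num at this
      linarith
    rcases le_total (q - 1) 1 with h | h
    · have h1 : (1 + t) ^ (q - 1) ≤ 1 + (q - 1) * t :=
        rpow_one_add_le_one_add_mul_self (by linarith) (by linarith) h
      have h2 : (1 - t) ≤ (1 - t) ^ (q - 1) := by
        have := Real.rpow_le_rpow_of_exponent_ge' (x := 1 - t) (by linarith) (by linarith)
          (by linarith) h
        simpa using this
      nlinarith
    · have h1 : (1 + t) ^ (q - 1) ≤ 1 + (2 ^ (q - 1) - 1) * t := by
        have := (convexOn_rpow h).2 (show (1 : ℝ) ∈ Set.Ici 0 by simp)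
          (show (2 : ℝ) ∈ Set.Ici 0 by simp)
          (by linarith : 0 ≤ 1 - t) ht0 (by ring)
        simp only [smul_eq_mul, Real.one_rpow, mul_one] at this
        have e : 1 - t + t * 2 = 1 + t := by ring
        rw [e] at this
        linarith
      have h2 : 1 + (q - 1) * (-t) ≤ (1 + (-t)) ^ (q - 1) :=
        one_add_mul_self_le_rpow_one_add (by linarith) h
      rw [← sub_eq_add_neg] at h2
      have h3 : (2 : ℝ) ^ (q - 1) ≤ 2 ^ q :=
        Real.rpow_le_rpow_of_exponent_le (by norm_num) (by linarith)
      nlinarith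
  have hD := mul_le_mul_of_nonneg_left hC (mul_nonneg (by linarith : 0 ≤ q) ht0)
  nlinarith

def cE (q : ℝ) : ℝ := 2 ^ q * (q + 2 * q * (2 ^ q + q))

lemma cE_pos (q : ℝ) (hq : 1 ≤ q) : 0 < cE q := by unfold cE; positivity

lemma el_E1 (q a δ u : ℝ) (hq : 1 ≤ q) (ha : 0 ≤ a) (hδ : 0 ≤ δ) (hu : u ^ 2 ≤ 4 * a * δ) :
    (a + 2 * δ + u) ^ q + (a + 2 * δ - u) ^ q ≤ 2 * a ^ q + 2 * cE q * ((a + δ) ^ (q - 1) * δ) := by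
  wlog hu0 : 0 ≤ u generalizing u
  · have := this (-u) (by simpa using hu) (by linarith)
    rw [sub_neg_eq_add, ← sub_eq_add_neg] at this
    linarith
  rcases eq_or_lt_of_le ha with h | h
  · subst h
    have hu' : u = 0 := by nlinarith
    subst hu'
    rw [Real.zero_rpow (by linarith)]
    simp only [zero_add, add_zero, sub_zero, mul_zero]
    have e1 : (2 * δ) ^ q = 2 ^ q * (δ ^ (q - 1) * δ) := by
      rw [Real.mul_rpow (by norm_num) hδ]
      rcases eq_or_lt_of_le hδ with h' | h'
      · subst h'; rw [Real.zero_rpow (by linarith)]; simp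
      · rw [Real.rpow_sub_one h'.ne']; field_simp
    rw [e1]
    have h1 : 0 ≤ δ ^ (q - 1) * δ := by positivity
    have h2 : (2 : ℝ) ^ q ≤ cE q := by
      unfold cE
      have : (0 : ℝ) < 2 ^ q := by positivity
      have : 1 ≤ (q + 2 * q * (2 ^ q + q)) := by nlinarith
      nlinarith
    nlinarith
  · set b := a + 2 * δ with hb
    have hbp : 0 < b := by linarith
    have hub : u ≤ b := by
      apply le_of_sq_le_sq _ hbp.le
      nlinarith
    have h1 : b + u = b * (1 + u / b) := by field_simp
    have h2 : b - u = b * (1 - u / b) := by field_simp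
    have hub1 : u / b ≤ 1 := by rw [div_le_one hbp]; exact hub
    have hub0 : 0 ≤ u / b := by positivity
    rw [h1, h2, Real.mul_rpow hbp.le (by linarith), Real.mul_rpow hbp.le (by linarith), ← mul_add]
    have h3 := el_bern q (u / b) hq hub0 hub1
    have hbq : 0 < b ^ q := by positivity
    have h4 := mul_le_mul_of_nonneg_left h3 hbq.le
    refine h4.trans ?_
    -- b^q ≤ a^q + 2 q δ b^(q-1)
    have hbq1 : b ^ (q - 1) = b ^ q / b := Real.rpow_sub_one hbp.ne' q
    have h5 : b ^ q ≤ a ^ q + 2 * q * δ * b ^ (q - 1) := by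
      have h6 : 1 + q * (-(2 * δ / b)) ≤ (1 + -(2 * δ / b)) ^ q :=
        one_add_mul_self_le_rpow_one_add (by
          have : 2 * δ / b ≤ 1 := by rw [div_le_one hbp]; linarith
          linarith) hq
      have h7 : a = b * (1 + -(2 * δ / b)) := by field_simp; rw [hb]; ring
      have h8 : a ^ q = b ^ q * (1 + -(2 * δ / b)) ^ q := by
        conv_lhs => rw [h7]
        rw [Real.mul_rpow hbp.le]
        have : 2 * δ / b ≤ 1 := by rw [div_le_one hbp]; linarith
        linarith
      rw [h8, hbq1]
      have h9 := mul_le_mul_of_nonneg_left h6 hbq.le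
      have h10 : b ^ q * (1 + q * -(2 * δ / b)) = b ^ q - 2 * q * δ * (b ^ q / b) := by
        field_simp; ring
      linarith
    have h11 : b ^ q * (u / b) ^ 2 ≤ 4 * (b ^ (q - 1) * δ) := by
      rw [hbq1]
      have : (u / b) ^ 2 ≤ 4 * δ / b := by
        rw [div_pow, div_le_div_iff₀ (by positivity) hbp]
        have h20 : u ^ 2 ≤ 4 * δ * b := by nlinarith
        nlinarith
      calc b ^ q * (u / b) ^ 2 ≤ b ^ q * (4 * δ / b) := by gcongr
        _ = _ := by ring
    have h12 : b ^ (q - 1) ≤ 2 ^ (q - 1) * (a + δ) ^ (q - 1) := by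
      rw [← Real.mul_rpow (by norm_num) (by linarith)]
      apply Real.rpow_le_rpow hbp.le (by linarith) (by linarith)
    have h13 : b ^ (q - 1) * δ ≤ 2 ^ (q - 1) * ((a + δ) ^ (q - 1) * δ) := by
      calc _ ≤ 2 ^ (q - 1) * (a + δ) ^ (q - 1) * δ := by gcongr
        _ = _ := by ring
    have h14 : (2 : ℝ) ^ (q - 1) = 2 ^ q / 2 := Real.rpow_sub_one (by norm_num) q
    rw [h14] at h13
    unfold cE
    set Z := (a + δ) ^ (q - 1) * δ
    set c := q * (2 ^ q + q) with hc
    have hc0 : 0 ≤ c := by positivity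
    have h15 := mul_le_mul_of_nonneg_left h11 hc0
    have h16 := mul_le_mul_of_nonneg_left h13 hc0
    have h17 := mul_le_mul_of_nonneg_left h13 (by linarith : 0 ≤ q)
    have hZ : 0 ≤ Z := by positivity
    have h18 : 0 ≤ 2 ^ q * c * Z := by positivity
    have e1 : b ^ q * (2 + c * (u / b) ^ 2) = 2 * b ^ q + c * (b ^ q * (u / b) ^ 2) := by ring
    have e2 : 2 * (2 ^ q * (q + 2 * q * (2 ^ q + q))) * Z
      = 4 * (q * (2 ^ q / 2 * Z)) + 8 * (c * (2 ^ q / 2 * Z)) := by rw [hc]; ring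
    have e3 : c * (2 ^ q / 2 * Z) = 2 ^ q * c * Z / 2 := by ring
    have e4 : 2 * q * δ * b ^ (q - 1) = 2 * (q * (b ^ (q - 1) * δ)) := by ring
    rw [e1, e2]
    rw [e4] at h5
    linarith

lemma el_E2 (α a δ u : ℝ) (hα : 0 ≤ α) (ha : 0 ≤ a) (hδ : 0 ≤ δ) (hu : u ^ 2 ≤ 4 * a * δ) :
    2 * ((a + δ) / 2) ^ α ≤ (a + 2 * δ + u) ^ α + (a + 2 * δ - u) ^ α ∧
    2 * a ^ α ≤ (a + 2 * δ + u) ^ α + (a + 2 * δ - u) ^ α := by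
  have hab : |u| ≤ a + 2 * δ := by
    apply abs_le_of_sq_le_sq _ (by linarith)
    nlinarith
  have hx : 0 ≤ a + 2 * δ + u := by linarith [neg_abs_le u]
  have hy : 0 ≤ a + 2 * δ - u := by linarith [le_abs_self u]
  have key : ∀ z : ℝ, 0 ≤ z → z ^ 2 ≤ (a + 2 * δ + u) * (a + 2 * δ - u) →
      2 * z ^ α ≤ (a + 2 * δ + u) ^ α + (a + 2 * δ - u) ^ α := by
    intro z hz h
    have h1 : (z ^ α) ^ 2 ≤ (a + 2 * δ + u) ^ α * (a + 2 * δ - u) ^ α := by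
      rw [← Real.mul_rpow hx hy]
      calc (z ^ α) ^ 2 = (z ^ 2) ^ α := by
            rw [← Real.rpow_natCast, ← Real.rpow_mul hz, mul_comm, Real.rpow_mul hz]; norm_num
        _ ≤ _ := Real.rpow_le_rpow (by positivity) h hα
    have h2 : 0 ≤ (a + 2 * δ + u) ^ α := by positivity
    have h3 : 0 ≤ (a + 2 * δ - u) ^ α := by positivity
    have h4 : 0 ≤ z ^ α := by positivity
    apply le_of_sq_le_sq _ (by positivity)
    nlinarith [sq_nonneg ((a + 2 * δ + u) ^ α - (a + 2 * δ - u) ^ α)]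
  constructor
  · apply key _ (by positivity)
    nlinarith [sq_nonneg (a - δ)]
  · apply key _ ha
    nlinarith



lemma gst_meas {Ω : Type*} [MeasurableSpace Ω] (d : ℕ → Ω → ℂ) (hd : ∀ j, Measurable (d j))
    (θ : ℝ) (j : ℕ) : Measurable (fun x => gst θ (fun i => d i x) j) := by
  induction j with
  | zero => exact measurable_const
  | succ j ih =>
    simp only [gst]
    have h1 : Measurable fun x => (gst θ (fun i => d i x) j).1 + d j x := ih.fst.add (hd j)
    apply Measurable.ite
    · exact measurableSet_lt measurable_const h1.norm
    · exact measurable_const.prodMk (ih.snd.add (h1.norm.pow_const 2))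
    · exact h1.prodMk ih.snd

lemma gY_meas {Ω : Type*} [MeasurableSpace Ω] (d : ℕ → Ω → ℂ) (hd : ∀ j, Measurable (d j))
    (θ : ℝ) (j : ℕ) : Measurable (fun x => gY θ (fun i => d i x) j) := by
  unfold gY
  have := gst_meas d hd θ j
  exact (this.fst.norm.pow_const 2).add this.snd

lemma gs_meas {Ω : Type*} [MeasurableSpace Ω] (d : ℕ → Ω → ℂ) (hd : ∀ j, Measurable (d j))
    (j : ℕ) : Measurable (fun x => gs (fun i => d i x) j) := by
  unfold gs
  exact Finset.measurable_sum _ fun i _ => (hd i).norm.pow_const 2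

lemma lint_sym {Ω : Type*} [MeasurableSpace Ω] {μ : Measure Ω} {σ : Ω → Ω}
    (hσ : MeasurePreserving σ μ μ) (h k : Ω → ℝ≥0∞) (hh : Measurable h)
    (H : ∀ x, h x + h (σ x) ≤ 2 * k x) : ∫⁻ x, h x ∂μ ≤ ∫⁻ x, k x ∂μ := by
  have h1 : ∫⁻ x, h (σ x) ∂μ = ∫⁻ x, h x ∂μ := hσ.lintegral_comp hh
  have h2 : 2 * ∫⁻ x, h x ∂μ ≤ 2 * ∫⁻ x, k x ∂μ := by
    calc 2 * ∫⁻ x, h x ∂μ = ∫⁻ x, h x ∂μ + ∫⁻ x, h (σ x) ∂μ := by rw [h1, two_mul]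
      _ = ∫⁻ x, (h x + h (σ x)) ∂μ := by rw [lintegral_add_left hh]
      _ ≤ ∫⁻ x, 2 * k x ∂μ := lintegral_mono H
      _ = 2 * ∫⁻ x, k x ∂μ := lintegral_const_mul' _ _ (by norm_num)
  exact (ENNReal.mul_le_mul_iff_right (by norm_num) (by norm_num)).1 h2

/-- cancellation of a finite quantity -/
lemma ennreal_cancel (I R C : ℝ≥0∞) (t : ℝ) (ht0 : 0 < t) (ht1 : t ≤ 1) (hI : I ≠ ∞)
    (h : I ≤ C * (I ^ (1 - t) * R ^ t)) : I ≤ C ^ (1 / t) * R := by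
  by_cases h0 : I = 0
  · simp [h0]
  have h1 : I ^ (1 - t) ≠ 0 := by
    simp only [ne_eq, ENNReal.rpow_eq_zero_iff, not_or, not_and_or]
    exact ⟨Or.inl h0, Or.inl hI⟩
  have h2 : I ^ (1 - t) ≠ ∞ := ENNReal.rpow_ne_top_of_nonneg (by linarith) hI
  have h3 : I ^ t ≤ C * R ^ t := by
    have e : I = I ^ (1 - t) * I ^ t := by
      rw [← ENNReal.rpow_add _ _ h0 hI]; simp
    have : I ^ (1 - t) * I ^ t ≤ I ^ (1 - t) * (C * R ^ t) := by
      rw [← e]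
      calc I ≤ _ := h
        _ = _ := by ring
    exact (ENNReal.mul_le_mul_iff_right h1 h2).1 this
  have h4 := ENNReal.rpow_le_rpow h3 (by positivity : 0 ≤ 1 / t)
  rw [ENNReal.mul_rpow_of_nonneg _ _ (by positivity), ← ENNReal.rpow_mul, ← ENNReal.rpow_mul] at h4
  have e : t * (1 / t) = 1 := by field_simp
  rw [e] at h4
  simpa using h4

section
variable {Ω : Type*} [MeasurableSpace Ω] {μ : Measure Ω}

lemma gY_zero_of_gs (θ : ℝ) (d : ℕ → ℂ) (j : ℕ) (h : gs d j = 0) : gY θ d j = 0 := by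
  have h0 : ∀ i < j, d i = (fun _ => (0 : ℂ)) i := by
    intro i hi
    unfold gs at h
    rw [Finset.sum_eq_zero_iff_of_nonneg (fun _ _ => by positivity)] at h
    simpa using h i (Finset.mem_range.2 hi)
  have hz : ∀ j, gst θ (fun _ => (0 : ℂ)) j = (0, 0) := by
    intro j
    induction j with
    | zero => rfl
    | succ j ih => simp [gst, ih]
  rw [gY_congr θ d _ j h0]
  simp [gY, hz]

lemma mart_small_aux (d : ℕ → Ω → ℂ) (hd : ∀ j, Measurable (d j)) (σ : ℕ → Ω → Ω)
    (hσ : ∀ j, MeasurePreserving (σ j) μ μ) (h1 : ∀ j i x, i < j → d i (σ j x) = d i x)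
    (h2 : ∀ j x, d j (σ j x) = - d j x) (θ q : ℝ) (hq : 0 < q) (hq1 : q ≤ 1) (n : ℕ) :
    ∫⁻ x, ENNReal.ofReal (gY θ (fun i => d i x) n * gs (fun i => d i x) n ^ (q - 1)) ∂μ ≤
      ∫⁻ x, ENNReal.ofReal ((1 / q) * gs (fun i => d i x) n ^ q) ∂μ := by
  induction n with
  | zero => simp [gY_zero]
  | succ n ih =>
    have hY := gY_meas d hd θ
    have hs := gs_meas d hd
    calc _ ≤ ∫⁻ x, (ENNReal.ofReal (gY θ (fun i => d i x) n * gs (fun i => d i x) n ^ (q - 1))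
          + ENNReal.ofReal ((1 / q) * (gs (fun i => d i x) (n + 1) ^ q
            - gs (fun i => d i x) n ^ q))) ∂μ := by
          apply lint_sym (hσ n)
          · exact ((hY (n + 1)).mul ((hs (n + 1)).pow_const _)).ennreal_ofReal
          intro x
          obtain ⟨u, _, hu1, hu2⟩ := gY_flip θ (fun i => d i x) (fun i => d i (σ n x)) n
            (fun i hi => h1 n i x hi) (h2 n x)
          have e : gs (fun i => d i (σ n x)) (n + 1) = gs (fun i => d i x) (n + 1) := by
            apply gs_congr
            intro i hi
            rcases Nat.lt_succ_iff_lt_or_eq.1 hi with h | h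
            · simp only [h1 n i x h]
            · subst h; simp only [h2, norm_neg]
          rw [e]
          have hY0 := gY_nonneg θ (fun i => d i x) (n + 1)
          have hY1 := gY_nonneg θ (fun i => d i (σ n x)) (n + 1)
          have hY2 := gY_nonneg θ (fun i => d i x) n
          have hs1 := gs_nonneg (fun i => d i x) (n + 1)
          have hs2 := gs_nonneg (fun i => d i x) n
          have hss := gs_succ (fun i => d i x) n
          have hR := el_R1 q (gs (fun i => d i x) n) (‖d n x‖ ^ 2) hq hq1 hs2 (by positivity)
          rw [← hss] at hR
          have hYs : gY θ (fun i => d i x) n * gs (fun i => d i x) (n + 1) ^ (q - 1) ≤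
              gY θ (fun i => d i x) n * gs (fun i => d i x) n ^ (q - 1) := by
            rcases eq_or_lt_of_le hs2 with h | h
            · rw [gY_zero_of_gs θ _ n h.symm]; simp
            · exact mul_le_mul_of_nonneg_left (Real.rpow_le_rpow_of_nonpos h
                (gs_mono _ (Nat.le_succ n)) (by linarith)) hY2
          rw [← ENNReal.ofReal_add (by positivity) (by positivity),
            ← ENNReal.ofReal_add (by positivity)
              (le_trans (by positivity) hR)]
          rw [show (2 : ℝ≥0∞) = ENNReal.ofReal 2 by simp, ← ENNReal.ofReal_mul (by norm_num)]
          apply ENNReal.ofReal_le_ofReal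
          rw [hu1, hu2]
          nlinarith
      _ = ∫⁻ x, (ENNReal.ofReal (gY θ (fun i => d i x) n * gs (fun i => d i x) n ^ (q - 1))) ∂μ
          + ∫⁻ x, ENNReal.ofReal ((1 / q) * (gs (fun i => d i x) (n + 1) ^ q
            - gs (fun i => d i x) n ^ q)) ∂μ := by
          rw [lintegral_add_left]
          exact ((hY n).mul ((hs n).pow_const _)).ennreal_ofReal
      _ ≤ ∫⁻ x, ENNReal.ofReal ((1 / q) * gs (fun i => d i x) n ^ q) ∂μ
          + ∫⁻ x, ENNReal.ofReal ((1 / q) * (gs (fun i => d i x) (n + 1) ^ q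
            - gs (fun i => d i x) n ^ q)) ∂μ := by gcongr
      _ = _ := by
          rw [← lintegral_add_left]
          · apply lintegral_congr
            intro x
            have hs2 := gs_nonneg (fun i => d i x) n
            have : gs (fun i => d i x) n ^ q ≤ gs (fun i => d i x) (n + 1) ^ q :=
              Real.rpow_le_rpow hs2 (gs_mono _ (Nat.le_succ n)) hq.le
            rw [← ENNReal.ofReal_add (by positivity)
              (mul_nonneg (by positivity) (by linarith))]
            congr 1; ring
          · exact (((hs n).pow_const _).const_mul _).ennreal_ofReal

lemma mart_small (d : ℕ → Ω → ℂ) (hd : ∀ j, Measurable (d j)) (σ : ℕ → Ω → Ω)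
    (hσ : ∀ j, MeasurePreserving (σ j) μ μ) (h1 : ∀ j i x, i < j → d i (σ j x) = d i x)
    (h2 : ∀ j x, d j (σ j x) = - d j x) (θ q : ℝ) (hq : 0 < q) (hq1 : q ≤ 1) (n : ℕ) :
    ∫⁻ x, ENNReal.ofReal (gY θ (fun i => d i x) n ^ q) ∂μ ≤
      ENNReal.ofReal ((1 / q) ^ q) * ∫⁻ x, ENNReal.ofReal (gs (fun i => d i x) n ^ q) ∂μ := by
  have hY := gY_meas d hd θ n
  have hs := gs_meas d hd n
  have aux := mart_small_aux d hd σ hσ h1 h2 θ q hq hq1 n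
  simp_rw [ENNReal.ofReal_mul (by positivity : 0 ≤ 1 / q)] at aux
  rw [lintegral_const_mul' _ _ (by simp)] at aux
  have hold := ENNReal.lintegral_mul_norm_pow_le (μ := μ)
    (f := fun x => ENNReal.ofReal (gY θ (fun i => d i x) n * gs (fun i => d i x) n ^ (q - 1)))
    (g := fun x => ENNReal.ofReal (gs (fun i => d i x) n ^ q))
    (hY.mul (hs.pow_const _)).ennreal_ofReal.aemeasurable
    (hs.pow_const _).ennreal_ofReal.aemeasurable hq.le (sub_nonneg.2 hq1) (by ring)
  calc ∫⁻ x, ENNReal.ofReal (gY θ (fun i => d i x) n ^ q) ∂μ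
      = ∫⁻ x, (ENNReal.ofReal (gY θ (fun i => d i x) n * gs (fun i => d i x) n ^ (q - 1))) ^ q *
          (ENNReal.ofReal (gs (fun i => d i x) n ^ q)) ^ (1 - q) ∂μ := by
        apply lintegral_congr
        intro x
        have hY2 := gY_nonneg θ (fun i => d i x) n
        have hs2 := gs_nonneg (fun i => d i x) n
        rw [ENNReal.ofReal_rpow_of_nonneg (by positivity) hq.le,
          ENNReal.ofReal_rpow_of_nonneg (by positivity) (by linarith),
          ← ENNReal.ofReal_mul (by positivity)]
        congr 1
        rcases eq_or_lt_of_le hs2 with h | h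
        · rw [gY_zero_of_gs θ _ n h.symm]
          simp [Real.zero_rpow hq.ne']
        · rw [Real.mul_rpow hY2 (by positivity), ← Real.rpow_mul h.le, ← Real.rpow_mul h.le,
            mul_assoc, ← Real.rpow_add h]
          have : (q - 1) * q + q * (1 - q) = 0 := by ring
          rw [this]; simp
    _ ≤ _ := hold
    _ ≤ (ENNReal.ofReal (1 / q) * ∫⁻ x, ENNReal.ofReal (gs (fun i => d i x) n ^ q) ∂μ) ^ q *
        (∫⁻ x, ENNReal.ofReal (gs (fun i => d i x) n ^ q) ∂μ) ^ (1 - q) := by gcongr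
    _ = _ := by
        rw [ENNReal.mul_rpow_of_nonneg _ _ hq.le, mul_assoc,
          ← ENNReal.rpow_add_of_nonneg _ _ hq.le (by linarith),
          ENNReal.ofReal_rpow_of_nonneg (by positivity) hq.le]
        simp
lemma gW_step (d : ℕ → Ω → ℂ) (σ : ℕ → Ω → Ω)
    (h1 : ∀ j i x, i < j → d i (σ j x) = d i x)
    (h2 : ∀ j x, d j (σ j x) = - d j x) (θ : ℝ) (n : ℕ) (x : Ω) :
    ∃ u : ℝ, u ^ 2 ≤ 4 * (gY θ (fun i => d i x) n + gs (fun i => d i x) n) * ‖d n x‖ ^ 2 ∧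
      gY θ (fun i => d i x) (n + 1) + gs (fun i => d i x) (n + 1) =
        (gY θ (fun i => d i x) n + gs (fun i => d i x) n) + 2 * ‖d n x‖ ^ 2 + u ∧
      gY θ (fun i => d i (σ n x)) (n + 1) + gs (fun i => d i (σ n x)) (n + 1) =
        (gY θ (fun i => d i x) n + gs (fun i => d i x) n) + 2 * ‖d n x‖ ^ 2 - u := by
  obtain ⟨u, hu0, hu1, hu2⟩ := gY_flip θ (fun i => d i x) (fun i => d i (σ n x)) n
    (fun i hi => h1 n i x hi) (h2 n x)
  have e : gs (fun i => d i (σ n x)) (n + 1) = gs (fun i => d i x) (n + 1) := by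
    apply gs_congr
    intro i hi
    rcases Nat.lt_succ_iff_lt_or_eq.1 hi with h | h
    · simp only [h1 n i x h]
    · subst h; simp only [h2, norm_neg]
  have hss := gs_succ (fun i => d i x) n
  have hs2 := gs_nonneg (fun i => d i x) n
  refine ⟨u, ?_, ?_, ?_⟩
  · refine hu0.trans ?_
    gcongr
    linarith
  · rw [hu1, hss]; ring
  · rw [hu2, e, hss]; ring

lemma mart_large (d : ℕ → Ω → ℂ) (hd : ∀ j, Measurable (d j)) (σ : ℕ → Ω → Ω)
    (hσ : ∀ j, MeasurePreserving (σ j) μ μ) (h1 : ∀ j i x, i < j → d i (σ j x) = d i x)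
    (h2 : ∀ j x, d j (σ j x) = - d j x) (θ q : ℝ) (hq : 1 ≤ q) (n : ℕ) :
    ∫⁻ x, ENNReal.ofReal (gY θ (fun i => d i x) n ^ q) ∂μ ≤
      ENNReal.ofReal (cE q * 2 ^ (q - 1)) ^ q *
        ∫⁻ x, ENNReal.ofReal (gs (fun i => d i x) n ^ q) ∂μ := by
  set W : ℕ → Ω → ℝ := fun j x => gY θ (fun i => d i x) j + gs (fun i => d i x) j with hW
  have hWm : ∀ j, Measurable (W j) := fun j => (gY_meas d hd θ j).add (gs_meas d hd j)
  have hW0 : ∀ j x, 0 ≤ W j x := fun j x => add_nonneg (gY_nonneg _ _ _) (gs_nonneg _ _)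
  have hstep : ∀ j x, ∃ u : ℝ, u ^ 2 ≤ 4 * W j x * ‖d j x‖ ^ 2 ∧
      W (j + 1) x = W j x + 2 * ‖d j x‖ ^ 2 + u ∧
      W (j + 1) (σ j x) = W j x + 2 * ‖d j x‖ ^ 2 - u := fun j x => gW_step d σ h1 h2 θ j x
  have hδm : ∀ j, Measurable fun x => ‖d j x‖ ^ 2 := fun j => (hd j).norm.pow_const 2
  have c0 := cE_pos q hq
  have S1 : ∀ j, ∫⁻ x, ENNReal.ofReal (W (j + 1) x ^ q) ∂μ ≤
      ∫⁻ x, (ENNReal.ofReal (W j x ^ q) +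
        ENNReal.ofReal (cE q * ((W j x + ‖d j x‖ ^ 2) ^ (q - 1) * ‖d j x‖ ^ 2))) ∂μ := by
    intro j
    apply lint_sym (hσ j) _ _ ((hWm (j + 1)).pow_const q).ennreal_ofReal
    intro x
    obtain ⟨u, hu, hu1, hu2⟩ := hstep j x
    have hE := el_E1 q (W j x) (‖d j x‖ ^ 2) u hq (hW0 j x) (by positivity) hu
    have hp := hW0 j x
    have hp1 := hW0 (j + 1) x
    have hp2 := hW0 (j + 1) (σ j x)
    rw [← ENNReal.ofReal_add (by positivity) (by positivity),
      ← ENNReal.ofReal_add (by positivity) (by positivity)]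
    rw [show (2 : ℝ≥0∞) = ENNReal.ofReal 2 by simp, ← ENNReal.ofReal_mul (by norm_num)]
    apply ENNReal.ofReal_le_ofReal
    rw [hu1, hu2]
    linarith
  have S2 : ∀ j k, ∫⁻ x, ENNReal.ofReal (((W j x + ‖d j x‖ ^ 2) / 2) ^ (q - 1) * ‖d j x‖ ^ 2) ∂μ ≤
      ∫⁻ x, ENNReal.ofReal (W (j + 1 + k) x ^ (q - 1) * ‖d j x‖ ^ 2) ∂μ := by
    intro j k
    have hq' : 0 ≤ q - 1 := by linarith
    induction k with
    | zero =>
      have h3 : ∫⁻ x, ENNReal.ofReal (W (j + 1) x ^ (q - 1) * ‖d j x‖ ^ 2) ∂μ =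
        ∫⁻ x, ENNReal.ofReal (W (j + 1) (σ j x) ^ (q - 1) * ‖d j (σ j x)‖ ^ 2) ∂μ := by
        rw [(hσ j).lintegral_comp (f := fun x =>
          ENNReal.ofReal (W (j + 1) x ^ (q - 1) * ‖d j x‖ ^ 2))]
        exact (((hWm (j + 1)).pow_const _).mul (hδm j)).ennreal_ofReal
      have h4 : 2 * ∫⁻ x, ENNReal.ofReal
          (((W j x + ‖d j x‖ ^ 2) / 2) ^ (q - 1) * ‖d j x‖ ^ 2) ∂μ ≤
          2 * ∫⁻ x, ENNReal.ofReal (W (j + 1) x ^ (q - 1) * ‖d j x‖ ^ 2) ∂μ := by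
        conv_rhs => rw [two_mul]
        conv_rhs =>
          arg 2
          rw [h3]
        have hm : Measurable fun x => ENNReal.ofReal (W (j + 1) x ^ (q - 1) * ‖d j x‖ ^ 2) :=
          (((hWm (j + 1)).pow_const _).mul (hδm j)).ennreal_ofReal
        rw [← lintegral_const_mul' _ _ (by norm_num), ← lintegral_add_left hm]
        apply lintegral_mono
        intro x
        obtain ⟨u, hu, hu1, hu2⟩ := hstep j x
        have hE := (el_E2 (q - 1) (W j x) (‖d j x‖ ^ 2) u hq' (hW0 j x) (by positivity) hu).1
        have hp := hW0 j x
        have hp1 := hW0 (j + 1) x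
        have hp2 := hW0 (j + 1) (σ j x)
        simp only [h2, norm_neg]
        rw [← ENNReal.ofReal_add (by positivity) (by positivity)]
        rw [show (2 : ℝ≥0∞) = ENNReal.ofReal 2 by simp, ← ENNReal.ofReal_mul (by norm_num)]
        apply ENNReal.ofReal_le_ofReal
        rw [hu1, hu2, ← add_mul, ← mul_assoc]
        gcongr
      exact (ENNReal.mul_le_mul_iff_right (by norm_num) (by norm_num)).1 h4
    | succ k ih =>
      refine ih.trans ?_
      have h3 : ∫⁻ x, ENNReal.ofReal (W (j + 1 + (k + 1)) x ^ (q - 1) * ‖d j x‖ ^ 2) ∂μ =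
        ∫⁻ x, ENNReal.ofReal (W (j + 1 + (k + 1)) (σ (j + 1 + k) x) ^ (q - 1) *
          ‖d j (σ (j + 1 + k) x)‖ ^ 2) ∂μ := by
        rw [(hσ (j + 1 + k)).lintegral_comp (f := fun x =>
          ENNReal.ofReal (W (j + 1 + (k + 1)) x ^ (q - 1) * ‖d j x‖ ^ 2))]
        exact (((hWm _).pow_const _).mul (hδm j)).ennreal_ofReal
      have h4 : 2 * ∫⁻ x, ENNReal.ofReal (W (j + 1 + k) x ^ (q - 1) * ‖d j x‖ ^ 2) ∂μ ≤
          2 * ∫⁻ x, ENNReal.ofReal (W (j + 1 + (k + 1)) x ^ (q - 1) * ‖d j x‖ ^ 2) ∂μ := by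
        conv_rhs => rw [two_mul]
        conv_rhs =>
          arg 2
          rw [h3]
        have hm : Measurable fun x =>
            ENNReal.ofReal (W (j + 1 + (k + 1)) x ^ (q - 1) * ‖d j x‖ ^ 2) :=
          (((hWm _).pow_const _).mul (hδm j)).ennreal_ofReal
        rw [← lintegral_const_mul' _ _ (by norm_num), ← lintegral_add_left hm]
        apply lintegral_mono
        intro x
        obtain ⟨u, hu, hu1, hu2⟩ := hstep (j + 1 + k) x
        have hE := (el_E2 (q - 1) (W (j + 1 + k) x) (‖d (j + 1 + k) x‖ ^ 2) u hq'
          (hW0 _ x) (by positivity) hu).2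
        have hp := hW0 (j + 1 + k) x
        have hp1 := hW0 (j + 1 + (k + 1)) x
        have hp2 := hW0 (j + 1 + (k + 1)) (σ (j + 1 + k) x)
        beta_reduce
        rw [h1 (j + 1 + k) j x (by omega)]
        rw [← ENNReal.ofReal_add (by positivity) (by positivity)]
        rw [show (2 : ℝ≥0∞) = ENNReal.ofReal 2 by simp, ← ENNReal.ofReal_mul (by norm_num)]
        apply ENNReal.ofReal_le_ofReal
        rw [← add_assoc, hu1, hu2, ← add_mul, ← mul_assoc]
        gcongr
      exact (ENNReal.mul_le_mul_iff_right (by norm_num) (by norm_num)).1 h4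
  have S3 : ∀ m ≤ n, ∫⁻ x, ENNReal.ofReal (W m x ^ q) ∂μ ≤
      ENNReal.ofReal (cE q * 2 ^ (q - 1)) *
      ∫⁻ x, ENNReal.ofReal (W n x ^ (q - 1) * gs (fun i => d i x) m) ∂μ := by
    intro m hm
    induction m with
    | zero =>
      simp [hW, gY_zero, gs, Real.zero_rpow (by linarith : q ≠ 0)]
    | succ m ih =>
      refine (S1 m).trans ?_
      rw [lintegral_add_left ((hWm m).pow_const q).ennreal_ofReal]
      obtain ⟨k, rfl⟩ := Nat.exists_eq_add_of_le hm
      have h5 : ∫⁻ x, ENNReal.ofReal (cE q * ((W m x + ‖d m x‖ ^ 2) ^ (q - 1) * ‖d m x‖ ^ 2)) ∂μ ≤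
          ENNReal.ofReal (cE q * 2 ^ (q - 1)) *
            ∫⁻ x, ENNReal.ofReal (W (m + 1 + k) x ^ (q - 1) * ‖d m x‖ ^ 2) ∂μ := by
        refine le_trans (le_of_eq ?_) (mul_le_mul_right (S2 m k) _)
        rw [← lintegral_const_mul' _ _ (by simp)]
        apply lintegral_congr
        intro x
        rw [← ENNReal.ofReal_mul (by positivity)]
        congr 1
        have hp := hW0 m x
        rw [Real.div_rpow (by positivity) (by norm_num)]
        field_simp
      refine (add_le_add (ih (by omega)) h5).trans ?_
      rw [← mul_add, ← lintegral_add_left]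
      · gcongr with x
        have hp := hW0 (m + 1 + k) x
        have hs2 := gs_nonneg (fun i => d i x) m
        rw [← ENNReal.ofReal_add (by positivity) (by positivity), ← mul_add, gs_succ]
      · exact (((hWm _).pow_const _).mul (gs_meas d hd m)).ennreal_ofReal
  have S4 : ∀ j ≤ n, ∀ x, W j x ≤ (3 * 2 ^ j - 3) * gs (fun i => d i x) n := by
    intro j hj x
    induction j with
    | zero => simp [hW, gY_zero, gs]
    | succ j ih =>
      have ih := ih (by omega)
      obtain ⟨u, hu, hu1, _⟩ := hstep j x
      have hp := hW0 j x
      have h6 : u ≤ W j x + ‖d j x‖ ^ 2 := by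
        apply le_of_sq_le_sq _ (by positivity)
        nlinarith [sq_nonneg (W j x - ‖d j x‖ ^ 2)]
      have h7 : ‖d j x‖ ^ 2 ≤ gs (fun i => d i x) n := by
        refine le_trans ?_ (gs_mono (fun i => d i x) hj)
        rw [gs_succ]
        linarith [gs_nonneg (fun i => d i x) j]
      have e : (2 : ℝ) ^ (j + 1) = 2 ^ j * 2 := pow_succ _ _
      rw [hu1, e]
      nlinarith
  set R := ∫⁻ x, ENNReal.ofReal (gs (fun i => d i x) n ^ q) ∂μ with hR
  have c1 : 0 < ENNReal.ofReal (cE q * 2 ^ (q - 1)) ^ q := by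
    apply ENNReal.rpow_pos _ (by simp)
    rw [ENNReal.ofReal_pos]; positivity
  by_cases hRt : R = ∞
  · rw [hRt, ENNReal.mul_top c1.ne']; exact le_top
  have hq0 : 0 < q := by linarith
  have hYW : ∫⁻ x, ENNReal.ofReal (gY θ (fun i => d i x) n ^ q) ∂μ ≤
      ∫⁻ x, ENNReal.ofReal (W n x ^ q) ∂μ := by
    gcongr with x
    · exact gY_nonneg _ _ _
    · exact le_add_of_nonneg_right (gs_nonneg _ _)
  refine hYW.trans ?_
  have hfin : ∫⁻ x, ENNReal.ofReal (W n x ^ q) ∂μ ≠ ∞ := by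
    have : ∫⁻ x, ENNReal.ofReal (W n x ^ q) ∂μ ≤
        ENNReal.ofReal ((3 * 2 ^ n - 3) ^ q) * R := by
      rw [hR, ← lintegral_const_mul' _ _ (by simp)]
      gcongr with x
      have h8 : (0 : ℝ) ≤ 3 * 2 ^ n - 3 := by
        have : (1 : ℝ) ≤ 2 ^ n := one_le_pow₀ (by norm_num)
        linarith
      rw [← ENNReal.ofReal_mul (by positivity), ← Real.mul_rpow h8 (gs_nonneg _ _)]
      exact ENNReal.ofReal_le_ofReal (Real.rpow_le_rpow (hW0 _ _) (S4 n le_rfl x) hq0.le)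
    exact ne_top_of_le_ne_top (ENNReal.mul_ne_top (by simp) hRt) this
  have hq1 : 0 ≤ 1 - 1 / q := by
    rw [sub_nonneg, div_le_one hq0]; exact hq
  have hold := ENNReal.lintegral_mul_norm_pow_le (μ := μ)
    (f := fun x => ENNReal.ofReal (W n x ^ q))
    (g := fun x => ENNReal.ofReal (gs (fun i => d i x) n ^ q))
    ((hWm n).pow_const _).ennreal_ofReal.aemeasurable
    ((gs_meas d hd n).pow_const _).ennreal_ofReal.aemeasurable hq1
    (by positivity : 0 ≤ 1 / q) (by ring)
  have h9 : ∫⁻ x, ENNReal.ofReal (W n x ^ (q - 1) * gs (fun i => d i x) n) ∂μ =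
      ∫⁻ x, ENNReal.ofReal (W n x ^ q) ^ (1 - 1 / q) *
        ENNReal.ofReal (gs (fun i => d i x) n ^ q) ^ (1 / q) ∂μ := by
    apply lintegral_congr
    intro x
    have hp := hW0 n x
    have hs2 := gs_nonneg (fun i => d i x) n
    rw [ENNReal.ofReal_rpow_of_nonneg (by positivity) hq1,
      ENNReal.ofReal_rpow_of_nonneg (by positivity) (by positivity),
      ← Real.rpow_mul hp, ← Real.rpow_mul hs2, ← ENNReal.ofReal_mul (by positivity)]
    have e1 : q * (1 - 1 / q) = q - 1 := by field_simp
    have e2 : q * (1 / q) = 1 := by field_simp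
    rw [e1, e2, Real.rpow_one]
  have h10 := S3 n le_rfl
  rw [h9] at h10
  have h11 := ennreal_cancel _ R _ (1 / q) (by positivity) (by rw [div_le_one hq0]; exact hq)
    hfin (h10.trans (mul_le_mul_right hold _))
  simpa using h11
end



/-- Hardy-Littlewood maximal function at dyadic radii -/
def mxA (n : ℤ) (w : ℝ → ℝ≥0∞) (x : ℝ) : ℝ≥0∞ :=
  ENNReal.ofReal ((2 : ℝ) ^ (-n)) * ∫⁻ y in Metric.closedBall x ((2 : ℝ) ^ n), w y

def Mx (w : ℝ → ℝ≥0∞) (x : ℝ) : ℝ≥0∞ := ⨆ n : ℤ, mxA n w x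

lemma mxA_meas (n : ℤ) (w : ℝ → ℝ≥0∞) (hw : Measurable w) : Measurable (mxA n w) := by
  unfold mxA
  apply Measurable.const_mul
  have : ∀ x : ℝ, ∫⁻ y in Metric.closedBall x ((2 : ℝ) ^ n), w y =
      ∫⁻ y, ({z : ℝ × ℝ | dist z.2 z.1 ≤ (2 : ℝ) ^ n}.indicator (fun z => w z.2)) (x, y) := by
    intro x
    rw [← lintegral_indicator Metric.isClosed_closedBall.measurableSet]
    rfl
  simp_rw [this]
  apply Measurable.lintegral_prod_right'
  apply Measurable.indicator (hw.comp measurable_snd)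
  exact measurableSet_le (measurable_snd.dist measurable_fst) measurable_const

lemma Mx_meas (w : ℝ → ℝ≥0∞) (hw : Measurable w) : Measurable (Mx w) :=
  Measurable.iSup fun n => mxA_meas n w hw

lemma two_zpow_ofReal (n : ℤ) : ENNReal.ofReal ((2 : ℝ) ^ n) ≠ 0 := by
  simp only [ne_eq, ENNReal.ofReal_eq_zero, not_le]; positivity

lemma Mx_weak (w : ℝ → ℝ≥0∞) (s : ℝ≥0∞) (hs : s ≠ ∞) :
    s * volume {x | s < Mx w x} ≤ 10 * ∫⁻ y, w y := by
  by_cases hs0 : s = 0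
  · simp [hs0]
  by_cases hI : ∫⁻ y, w y = ∞
  · rw [hI]; simp
  have hx : ∀ x ∈ {x | s < Mx w x}, ∃ n : ℤ, s < mxA n w x := by
    intro x hx
    exact lt_iSup_iff.1 hx
  choose! n hn using hx
  have hle : ∀ x ∈ {x | s < Mx w x}, s * ENNReal.ofReal (2 ^ n x) ≤
      ∫⁻ y in Metric.closedBall x ((2 : ℝ) ^ n x), w y := by
    intro x hx
    have h := (hn x hx).le
    unfold mxA at h
    calc s * ENNReal.ofReal (2 ^ n x) ≤ (ENNReal.ofReal ((2 : ℝ) ^ (-n x)) *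
        ∫⁻ y in Metric.closedBall x ((2 : ℝ) ^ n x), w y) * ENNReal.ofReal (2 ^ n x) := by gcongr
      _ = (ENNReal.ofReal ((2 : ℝ) ^ (-n x)) * ENNReal.ofReal (2 ^ n x)) *
        ∫⁻ y in Metric.closedBall x ((2 : ℝ) ^ n x), w y := by ring
      _ = _ := by
        rw [← ENNReal.ofReal_mul (by positivity), ← zpow_add₀ (by norm_num)]; simp
  obtain ⟨u, huS, hud, hu⟩ := Vitali.exists_disjoint_subfamily_covering_enlargement_closedBall
    {x | s < Mx w x} (fun x => x) (fun x => (2 : ℝ) ^ n x)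
    ((∫⁻ y, w y) / s).toReal (by
      intro x hx
      have h1 : ENNReal.ofReal (2 ^ n x) ≤ (∫⁻ y, w y) / s := by
        rw [ENNReal.le_div_iff_mul_le (Or.inl hs0) (Or.inl hs), mul_comm]
        exact (hle x hx).trans (setLIntegral_le_lintegral _ _)
      exact (ENNReal.ofReal_le_iff_le_toReal (ENNReal.div_lt_top hI hs0).ne).1 h1) 5 (by norm_num)
  have hc : u.Countable := by
    apply hud.countable_of_nonempty_interior
    intro x hx
    rw [interior_closedBall x (by positivity)]
    exact Metric.nonempty_ball.2 (by positivity)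
  have hcov : {x | s < Mx w x} ⊆ ⋃ b ∈ u, Metric.closedBall b (5 * (2 : ℝ) ^ n b) := by
    intro x hx
    obtain ⟨b, hb, h⟩ := hu x hx
    simp only [Set.mem_iUnion]
    exact ⟨b, hb, h (Metric.mem_closedBall_self (by positivity))⟩
  calc s * volume {x | s < Mx w x}
      ≤ s * ∑' b : u, volume (Metric.closedBall (b : ℝ) (5 * (2 : ℝ) ^ n b)) := by
        gcongr
        exact (measure_mono hcov).trans (measure_biUnion_le _ hc _)
    _ = ∑' b : u, 10 * (s * ENNReal.ofReal (2 ^ n b)) := by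
        rw [← ENNReal.tsum_mul_left]
        congr 1; ext b
        rw [Real.volume_closedBall, ← mul_assoc, ENNReal.ofReal_mul (by norm_num)]
        norm_num; ring
    _ ≤ ∑' b : u, 10 * ∫⁻ y in Metric.closedBall (b : ℝ) ((2 : ℝ) ^ n b), w y := by
        apply ENNReal.tsum_le_tsum
        intro b
        gcongr
        exact hle b (huS b.2)
    _ = 10 * ∑' b : u, ∫⁻ y in Metric.closedBall (b : ℝ) ((2 : ℝ) ^ n b), w y := by
        rw [ENNReal.tsum_mul_left]
    _ = 10 * ∫⁻ y in ⋃ b ∈ u, Metric.closedBall b ((2 : ℝ) ^ n b), w y := by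
        rw [lintegral_biUnion hc (fun b _ => Metric.isClosed_closedBall.measurableSet) hud]
    _ ≤ _ := mul_le_mul_right (setLIntegral_le_lintegral _ _) _

/-- truncation -/
lemma Mx_trunc (w : ℝ → ℝ≥0∞) (a : ℝ≥0∞) (x : ℝ) :
    Mx w x ≤ Mx (fun y => if a < w y then w y else 0) x + 2 * a := by
  unfold Mx
  apply iSup_le
  intro n
  refine le_trans ?_ (add_le_add_left (le_iSup _ n) _)
  unfold mxA
  calc ENNReal.ofReal ((2 : ℝ) ^ (-n)) * ∫⁻ y in Metric.closedBall x ((2 : ℝ) ^ n), w y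
      ≤ ENNReal.ofReal ((2 : ℝ) ^ (-n)) * ∫⁻ y in Metric.closedBall x ((2 : ℝ) ^ n),
        ((if a < w y then w y else 0) + a) := by
        gcongr with y
        split_ifs with h
        · exact le_self_add
        · simpa using h
    _ = ENNReal.ofReal ((2 : ℝ) ^ (-n)) * ((∫⁻ y in Metric.closedBall x ((2 : ℝ) ^ n),
        (if a < w y then w y else 0)) + a * ENNReal.ofReal (2 * 2 ^ n)) := by
        rw [lintegral_add_right _ measurable_const, lintegral_const]
        simp
    _ = _ := by
        rw [mul_add]
        congr 1
        rw [mul_left_comm, ← ENNReal.ofReal_mul (by positivity), mul_left_comm (2 ^ (-n)),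
          ← zpow_add₀ (by norm_num)]
        simp [mul_comm]

lemma exists_two_zpow (v : ℝ≥0∞) (h0 : v ≠ 0) (ht : v ≠ ∞) :
    ∃ K : ℤ, ENNReal.ofReal (2 ^ K) < v ∧ v ≤ ENNReal.ofReal (2 ^ (K + 1)) := by
  lift v to ℝ≥0 using ht
  have hv : 0 < (v : ℝ) := by
    have : v ≠ 0 := by simpa using h0
    positivity
  obtain ⟨K, h1, h2⟩ := exists_mem_Ioc_zpow hv (by norm_num : (1 : ℝ) < 2)
  refine ⟨K, ?_, ?_⟩
  · rw [← ENNReal.ofReal_coe_nnreal, ENNReal.ofReal_lt_ofReal_iff hv]; exact h1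
  · rw [← ENNReal.ofReal_coe_nnreal]; exact ENNReal.ofReal_le_ofReal h2

lemma layer_up (v : ℝ≥0∞) (t : ℝ) (ht : 0 < t) :
    v ^ t ≤ ∑' k : ℤ, if ENNReal.ofReal (2 ^ k) < v then (ENNReal.ofReal (2 ^ (k + 1))) ^ t else 0 := by
  by_cases h0 : v = 0
  · simp [h0, ht]
  by_cases h1 : v = ∞
  · subst h1
    have : (∑' k : ℤ, if ENNReal.ofReal (2 ^ k) < ∞ then (ENNReal.ofReal (2 ^ (k + 1))) ^ t else 0)
        = ∞ := by
      rw [← top_le_iff]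
      calc ∞ = ∑' _ : ℕ, (1 : ℝ≥0∞) :=
            (ENNReal.tsum_const_eq_top_of_ne_zero (α := ℕ) (c := 1) (by norm_num)).symm
        _ ≤ ∑' k : ℕ, (fun k : ℤ => if ENNReal.ofReal (2 ^ k) < ∞
            then (ENNReal.ofReal (2 ^ (k + 1))) ^ t else 0) (k : ℤ) := by
            apply ENNReal.tsum_le_tsum
            intro k
            simp only [ofReal_lt_top, if_true]
            apply ENNReal.one_le_rpow _ ht
            rw [ENNReal.one_le_ofReal]
            exact one_le_zpow₀ (by norm_num) (by positivity)
        _ ≤ _ := ENNReal.tsum_comp_le_tsum_of_injective Nat.cast_injective _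
    rw [this]; exact le_top
  obtain ⟨K, h2, h3⟩ := exists_two_zpow v h0 h1
  refine le_trans ?_ (ENNReal.le_tsum K)
  rw [if_pos h2]
  gcongr

lemma layer_down (a : ℝ) (ha : 0 < a) : ∃ C : ℝ≥0∞, C ≠ ∞ ∧ ∀ v : ℝ≥0∞,
    ∑' k : ℤ, (if ENNReal.ofReal (2 ^ k) < v then (ENNReal.ofReal (2 ^ k)) ^ a else 0)
      ≤ C * v ^ a := by
  set ρ : ℝ≥0∞ := (2⁻¹ : ℝ≥0∞) ^ a with hρ
  have hρ1 : ρ < 1 := ENNReal.rpow_lt_one (by simp) ha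
  refine ⟨(1 - ρ)⁻¹, ?_, ?_⟩
  · simp only [ne_eq, ENNReal.inv_eq_top, tsub_eq_zero_iff_le, not_le]; exact hρ1
  intro v
  by_cases h0 : v = 0
  · simp [h0]
  by_cases h1 : v = ∞
  · rw [h1, ENNReal.top_rpow_of_pos ha, ENNReal.mul_top]
    · exact le_top
    · simp
  obtain ⟨K, h2, h3⟩ := exists_two_zpow v h0 h1
  have hinj : Function.Injective (fun j : ℕ => K - (j : ℤ)) := by
    intro i j h; simpa using h
  rw [← hinj.tsum_eq]
  · calc _ ≤ ∑' j : ℕ, ρ ^ j * v ^ a := by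
          apply ENNReal.tsum_le_tsum
          intro j
          split_ifs with h
          · have : (ENNReal.ofReal (2 ^ (K - (j : ℤ)))) = (2⁻¹ : ℝ≥0∞) ^ j * ENNReal.ofReal (2 ^ K) := by
              rw [show (2⁻¹ : ℝ≥0∞) = ENNReal.ofReal (2⁻¹) by
                rw [ENNReal.ofReal_inv_of_pos (by norm_num)]; simp]
              rw [← ENNReal.ofReal_pow (by norm_num), ← ENNReal.ofReal_mul (by positivity)]
              congr 1
              rw [zpow_sub₀ (by norm_num)]
              simp [div_eq_mul_inv, mul_comm]
            rw [this, ENNReal.mul_rpow_of_nonneg _ _ ha.le]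
            gcongr
            rw [hρ, ← ENNReal.rpow_natCast, ← ENNReal.rpow_mul, ← ENNReal.rpow_natCast,
              ← ENNReal.rpow_mul, mul_comm]
          · exact zero_le
      _ = _ := by rw [ENNReal.tsum_mul_right, ENNReal.tsum_geometric]
  · intro k hk
    have hk' : ENNReal.ofReal (2 ^ k) < v := by
      by_contra h
      simp [h] at hk
    have h4 : (2 : ℝ) ^ k < 2 ^ (K + 1) := by
      have := hk'.trans_le h3
      rwa [ENNReal.ofReal_lt_ofReal_iff (by positivity)] at this
    have h5 : k < K + 1 := (zpow_lt_zpow_iff_right₀ (by norm_num)).1 h4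
    exact ⟨(K - k).toNat, by simp; omega⟩

/-- strong type for the maximal function -/
lemma Mx_strong (t : ℝ) (ht : 1 < t) : ∃ C : ℝ≥0∞, C ≠ ∞ ∧ ∀ w : ℝ → ℝ≥0∞, Measurable w →
    ∫⁻ x, Mx w x ^ t ≤ C * ∫⁻ x, w x ^ t := by
  obtain ⟨C, hC, hl⟩ := layer_down (t - 1) (by linarith)
  refine ⟨ENNReal.ofReal (2 ^ t) * 20 * (ENNReal.ofReal 4) ^ (t - 1) * C, ?_, ?_⟩
  · exact ENNReal.mul_ne_top (ENNReal.mul_ne_top (ENNReal.mul_ne_top (by simp) (by norm_num))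
      (ENNReal.rpow_ne_top_of_nonneg (by linarith) (by simp))) hC
  intro w hw
  have hM := Mx_meas w hw
  have hmeas : ∀ k : ℤ, Measurable fun y => if ENNReal.ofReal (2 ^ (k - 2)) < w y then w y else 0 :=
    fun k => Measurable.ite (measurableSet_lt measurable_const hw) hw measurable_const
  have key : ∀ k : ℤ, ENNReal.ofReal (2 ^ k) * volume {x | ENNReal.ofReal (2 ^ k) < Mx w x} ≤
      20 * ∫⁻ y, (if ENNReal.ofReal (2 ^ (k - 2)) < w y then w y else 0) := by
    intro k
    have h1 := Mx_weak (fun y => if ENNReal.ofReal (2 ^ (k - 2)) < w y then w y else 0)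
      (ENNReal.ofReal (2 ^ (k - 1))) (by simp)
    have e1 : ENNReal.ofReal (2 ^ k) = 2 * ENNReal.ofReal (2 ^ (k - 1)) := by
      rw [show (2 : ℝ≥0∞) = ENNReal.ofReal 2 by simp, ← ENNReal.ofReal_mul (by norm_num)]
      rw [zpow_sub₀ (by norm_num)]; congr 1; field_simp
    have e2 : ENNReal.ofReal (2 ^ (k - 1)) = 2 * ENNReal.ofReal (2 ^ (k - 2)) := by
      rw [show (2 : ℝ≥0∞) = ENNReal.ofReal 2 by simp, ← ENNReal.ofReal_mul (by norm_num)]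
      rw [zpow_sub₀ (by norm_num), zpow_sub₀ (by norm_num)]; congr 1; field_simp
    have hsub : {x | ENNReal.ofReal (2 ^ k) < Mx w x} ⊆ {x | ENNReal.ofReal (2 ^ (k - 1)) <
        Mx (fun y => if ENNReal.ofReal (2 ^ (k - 2)) < w y then w y else 0) x} := by
      intro x hx
      simp only [Set.mem_ofPred_eq] at hx ⊢
      have h2 := hx.trans_le (Mx_trunc w (ENNReal.ofReal (2 ^ (k - 2))) x)
      rw [← e2, e1, two_mul] at h2
      exact (ENNReal.add_lt_add_iff_right (by simp)).1 h2
    calc _ ≤ 2 * (ENNReal.ofReal (2 ^ (k - 1)) * volume {x | ENNReal.ofReal (2 ^ (k - 1)) <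
        Mx (fun y => if ENNReal.ofReal (2 ^ (k - 2)) < w y then w y else 0) x}) := by
          rw [e1, mul_assoc, ← e1]; gcongr
      _ ≤ 2 * (10 * ∫⁻ y, (if ENNReal.ofReal (2 ^ (k - 2)) < w y then w y else 0)) := by gcongr
      _ = _ := by rw [← mul_assoc]; norm_num
  have e3 : ∀ k : ℤ, (ENNReal.ofReal (2 ^ (k + 1))) ^ t =
      ENNReal.ofReal (2 ^ t) * ENNReal.ofReal (2 ^ k) ^ (t - 1) * ENNReal.ofReal (2 ^ k) := by
    intro k
    rw [mul_assoc]
    conv_rhs =>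
      arg 2
      arg 2
      rw [← ENNReal.rpow_one (ENNReal.ofReal (2 ^ k))]
    rw [← ENNReal.rpow_add _ _ (two_zpow_ofReal k) (by simp), zpow_add₀ (by norm_num),
      ENNReal.ofReal_mul (by positivity), ENNReal.mul_rpow_of_nonneg _ _ (by linarith), mul_comm]
    congr 2
    · rw [ENNReal.ofReal_rpow_of_nonneg (by simp) (by linarith)]; simp
    · ring
  calc ∫⁻ x, Mx w x ^ t ≤ ∫⁻ x, ∑' k : ℤ, if ENNReal.ofReal (2 ^ k) < Mx w x
        then (ENNReal.ofReal (2 ^ (k + 1))) ^ t else 0 :=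
        lintegral_mono fun x => layer_up _ t (by linarith)
    _ = ∑' k : ℤ, (ENNReal.ofReal (2 ^ (k + 1))) ^ t *
          volume {x | ENNReal.ofReal (2 ^ k) < Mx w x} := by
        rw [lintegral_tsum]
        · congr 1; ext k
          rw [← lintegral_indicator_const (measurableSet_lt measurable_const hM)]
          apply lintegral_congr
          intro a
          simp [Set.indicator_apply]
        · intro k
          exact (Measurable.ite (measurableSet_lt measurable_const hM) measurable_const
            measurable_const).aemeasurable
    _ ≤ ∑' k : ℤ, ENNReal.ofReal (2 ^ t) * ENNReal.ofReal (2 ^ k) ^ (t - 1) *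
          (20 * ∫⁻ y, (if ENNReal.ofReal (2 ^ (k - 2)) < w y then w y else 0)) := by
        apply ENNReal.tsum_le_tsum
        intro k
        rw [e3, mul_assoc]
        exact mul_le_mul_right (key k) _
    _ = ENNReal.ofReal (2 ^ t) * 20 * (ENNReal.ofReal 4) ^ (t - 1) *
        ∫⁻ y, ∑' k : ℤ, w y * (if ENNReal.ofReal (2 ^ (k - 2)) < w y then
          ENNReal.ofReal (2 ^ (k - 2)) ^ (t - 1) else 0) := by
        rw [lintegral_tsum, ← ENNReal.tsum_mul_left]
        · congr 1; ext k
          have e4 : ENNReal.ofReal (2 ^ k) ^ (t - 1) = (ENNReal.ofReal 4) ^ (t - 1) *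
              ENNReal.ofReal (2 ^ (k - 2)) ^ (t - 1) := by
            rw [← ENNReal.mul_rpow_of_nonneg _ _ (by linarith), ← ENNReal.ofReal_mul (by norm_num)]
            congr 2
            rw [zpow_sub₀ (by norm_num)]; field_simp; norm_num
          have e5 : ∫⁻ y, w y * (if ENNReal.ofReal (2 ^ (k - 2)) < w y then
              ENNReal.ofReal (2 ^ (k - 2)) ^ (t - 1) else 0) = ENNReal.ofReal (2 ^ (k - 2)) ^ (t - 1) *
              ∫⁻ y, (if ENNReal.ofReal (2 ^ (k - 2)) < w y then w y else 0) := by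
            rw [← lintegral_const_mul _ (hmeas k)]
            apply lintegral_congr
            intro y
            split_ifs
            · ring
            · simp
          rw [e4, e5]; ring
        · intro k
          exact (hw.mul (Measurable.ite (measurableSet_lt measurable_const hw) measurable_const
            measurable_const)).aemeasurable
    _ ≤ ENNReal.ofReal (2 ^ t) * 20 * (ENNReal.ofReal 4) ^ (t - 1) *
        ∫⁻ y, C * w y ^ t := by
        gcongr with y
        rw [ENNReal.tsum_mul_left]
        have e6 : (∑' k : ℤ, (if ENNReal.ofReal (2 ^ (k - 2)) < w y then
          ENNReal.ofReal (2 ^ (k - 2)) ^ (t - 1) else 0)) = ∑' k : ℤ,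
            (if ENNReal.ofReal (2 ^ k) < w y then ENNReal.ofReal (2 ^ k) ^ (t - 1) else 0) :=
          (Equiv.subRight (2 : ℤ)).tsum_eq (fun k : ℤ => (if ENNReal.ofReal (2 ^ k) < w y then
            ENNReal.ofReal (2 ^ k) ^ (t - 1) else 0))
        rw [e6]
        calc _ ≤ w y * (C * w y ^ (t - 1)) := by gcongr; exact hl _
          _ = C * (w y ^ (1 : ℝ) * w y ^ (t - 1)) := by rw [ENNReal.rpow_one]; ring
          _ = _ := by
            rw [← ENNReal.rpow_add_of_nonneg _ _ (by norm_num) (by linarith)]; congr 2; ring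
    _ = _ := by
        rw [lintegral_const_mul' _ _ hC]; ring



def kap (m : ℤ) (x y : ℝ) : ℝ≥0∞ := ENNReal.ofReal (2 ^ m / (1 + 2 ^ m * |x - y|) ^ 2)

def TT (m : ℤ) (h : ℝ → ℝ≥0∞) (x : ℝ) : ℝ≥0∞ := ∫⁻ y, kap m x y * h y

lemma kap_symm (m : ℤ) (x y : ℝ) : kap m x y = kap m y x := by
  unfold kap; rw [abs_sub_comm]

lemma kap_meas (m : ℤ) : Measurable fun z : ℝ × ℝ => kap m z.1 z.2 := by
  unfold kap
  apply Measurable.ennreal_ofReal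
  apply Measurable.div measurable_const
  apply Measurable.pow_const
  apply Measurable.const_add
  apply Measurable.const_mul
  exact (measurable_fst.sub measurable_snd).norm

lemma kap_meas' (m : ℤ) (x : ℝ) : Measurable fun y => kap m x y := by
  unfold kap
  apply Measurable.ennreal_ofReal
  apply Measurable.div measurable_const
  apply Measurable.pow_const
  apply Measurable.const_add
  apply Measurable.const_mul
  exact (measurable_id.const_sub x).norm

lemma kap_mul_meas (m : ℤ) (x : ℝ) (h : ℝ → ℝ≥0∞) (hh : Measurable h) :
    Measurable fun y => kap m x y * h y := (kap_meas' m x).mul hh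

lemma TT_meas (m : ℤ) (h : ℝ → ℝ≥0∞) (hh : Measurable h) : Measurable (TT m h) := by
  unfold TT
  exact Measurable.lintegral_prod_right' (f := fun z : ℝ × ℝ => kap m z.1 z.2 * h z.2)
    ((kap_meas m).mul (hh.comp measurable_snd))

lemma TT_mono (m : ℤ) {h g : ℝ → ℝ≥0∞} (H : ∀ x, h x ≤ g x) (x : ℝ) : TT m h x ≤ TT m g x := by
  unfold TT; gcongr with y; exact H y

lemma TT_adj (m : ℤ) (h g : ℝ → ℝ≥0∞) (hh : Measurable h) (hg : Measurable g) :
    ∫⁻ x, TT m h x * g x = ∫⁻ x, h x * TT m g x := by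
  unfold TT
  calc ∫⁻ x, (∫⁻ y, kap m x y * h y) * g x = ∫⁻ x, ∫⁻ y, kap m x y * h y * g x := by
        apply lintegral_congr; intro x
        rw [lintegral_mul_const _ (kap_mul_meas m x h hh)]
    _ = ∫⁻ y, ∫⁻ x, kap m x y * h y * g x := by
        rw [lintegral_lintegral_swap]
        exact (((kap_meas m).mul (hh.comp measurable_snd)).mul
          (hg.comp measurable_fst)).aemeasurable
    _ = _ := by
        apply lintegral_congr; intro y
        rw [← lintegral_const_mul _ (kap_mul_meas m y g hg)]
        apply lintegral_congr; intro x
        rw [kap_symm m x y]; ring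

lemma kap_le_aux (u : ℝ) (hu : 0 ≤ u) : ∃ k : ℕ, u ≤ 2 ^ k ∧ 1 / (1 + u) ^ 2 ≤ 4 * ((2 : ℝ) ^ k)⁻¹ ^ 2 := by
  by_cases h : u ≤ 1
  · refine ⟨0, by simpa using h, ?_⟩
    rw [div_le_iff₀ (by positivity)]
    simp; nlinarith
  · push Not at h
    obtain ⟨k, h1, h2⟩ := exists_nat_pow_near h.le (by norm_num : (1 : ℝ) < 2)
    refine ⟨k + 1, h2.le, ?_⟩
    have hk : (0 : ℝ) < 2 ^ k := by positivity
    rw [pow_succ 2 k, div_le_iff₀ (by positivity), inv_pow, mul_pow]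
    have : (4 : ℝ) * ((2 ^ k) ^ 2 * 2 ^ 2)⁻¹ * (1 + u) ^ 2 = (1 + u) ^ 2 / (2 ^ k) ^ 2 := by
      field_simp; norm_num
    rw [this, one_le_div (by positivity)]
    nlinarith

lemma TT_le_Mx (m : ℤ) (h : ℝ → ℝ≥0∞) (hh : Measurable h) (x : ℝ) : TT m h x ≤ 8 * Mx h x := by
  have hb : ∀ y, kap m x y * h y ≤ ∑' k : ℕ, (4 * (2⁻¹ : ℝ≥0∞) ^ k) *
      (ENNReal.ofReal (2 ^ (-((k : ℤ) - m))) *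
        (Metric.closedBall x ((2 : ℝ) ^ ((k : ℤ) - m))).indicator h y) := by
    intro y
    obtain ⟨k, h1, h2⟩ := kap_le_aux (2 ^ m * |x - y|) (by positivity)
    refine le_trans ?_ (ENNReal.le_tsum k)
    rw [Set.indicator_of_mem, ← mul_assoc]
    · gcongr
      unfold kap
      rw [show (2⁻¹ : ℝ≥0∞) = ENNReal.ofReal (2⁻¹) by
        rw [ENNReal.ofReal_inv_of_pos (by norm_num)]; simp,
        show (4 : ℝ≥0∞) = ENNReal.ofReal 4 by simp]
      rw [← ENNReal.ofReal_pow (by norm_num), ← ENNReal.ofReal_mul (by positivity),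
        ← ENNReal.ofReal_mul (by positivity)]
      apply ENNReal.ofReal_le_ofReal
      calc (2 : ℝ) ^ m / (1 + 2 ^ m * |x - y|) ^ 2 = 2 ^ m * (1 / (1 + 2 ^ m * |x - y|) ^ 2) := by ring
        _ ≤ 2 ^ m * (4 * ((2 : ℝ) ^ k)⁻¹ ^ 2) := by gcongr
        _ = _ := by
          rw [neg_sub, zpow_sub₀ (by norm_num), zpow_natCast, inv_pow, inv_pow]; field_simp
    · rw [Metric.mem_closedBall, dist_comm, Real.dist_eq, zpow_sub₀ (by norm_num), zpow_natCast,
        le_div_iff₀ (by positivity)]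
      linarith
  unfold TT
  have hm : ∀ k : ℕ, Measurable ((Metric.closedBall x ((2 : ℝ) ^ ((k : ℤ) - m))).indicator h) :=
    fun k => hh.indicator Metric.isClosed_closedBall.measurableSet
  calc ∫⁻ y, kap m x y * h y ≤ ∫⁻ y, ∑' k : ℕ, (4 * (2⁻¹ : ℝ≥0∞) ^ k) *
      (ENNReal.ofReal (2 ^ (-((k : ℤ) - m))) *
        (Metric.closedBall x ((2 : ℝ) ^ ((k : ℤ) - m))).indicator h y) := lintegral_mono hb
    _ = ∑' k : ℕ, (4 * (2⁻¹ : ℝ≥0∞) ^ k) * mxA ((k : ℤ) - m) h x := by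
        rw [lintegral_tsum fun k => (((hm k).const_mul _).const_mul _).aemeasurable]
        congr 1; ext k
        rw [lintegral_const_mul _ ((hm k).const_mul _), lintegral_const_mul _ (hm k),
          lintegral_indicator Metric.isClosed_closedBall.measurableSet]
        rfl
    _ ≤ ∑' k : ℕ, (4 * (2⁻¹ : ℝ≥0∞) ^ k) * Mx h x := by
        gcongr with k
        exact le_iSup (fun n => mxA n h x) _
    _ = _ := by
        rw [ENNReal.tsum_mul_right, ENNReal.tsum_mul_left, ENNReal.tsum_geometric,
          ENNReal.one_sub_inv_two, inv_inv]
        norm_num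

lemma TT_one (m : ℤ) (x : ℝ) : TT m (fun _ => 1) x ≤ 16 := by
  refine (TT_le_Mx m _ measurable_const x).trans ?_
  have : Mx (fun _ => 1) x ≤ 2 := by
    unfold Mx mxA
    apply iSup_le
    intro n
    rw [lintegral_one, Measure.restrict_apply_univ, Real.volume_closedBall,
      ← ENNReal.ofReal_mul (by positivity), mul_left_comm, ← zpow_add₀ (by norm_num)]
    simp
  calc _ ≤ (8 : ℝ≥0∞) * 2 := by gcongr
    _ = 16 := by norm_num

lemma TT_jensen (m : ℤ) (s : ℝ) (hs : 1 ≤ s) (h : ℝ → ℝ≥0∞) (hh : Measurable h) (x : ℝ) :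
    TT m h x ^ s ≤ 16 ^ (s - 1) * TT m (fun y => h y ^ s) x := by
  have hs0 : 0 < s := by linarith
  have h1s : 0 ≤ 1 - 1 / s := by rw [sub_nonneg, div_le_one hs0]; exact hs
  have hold := ENNReal.lintegral_mul_norm_pow_le (μ := volume)
    (f := fun y => kap m x y * h y ^ s) (g := fun y => kap m x y * 1)
    ((kap_meas' m x).mul (hh.pow_const s)).aemeasurable
    ((kap_meas' m x).mul measurable_const).aemeasurable (by positivity : 0 ≤ 1 / s) h1s (by ring)
  have e : TT m h x ≤ TT m (fun y => h y ^ s) x ^ (1 / s) * TT m (fun _ => 1) x ^ (1 - 1 / s) := by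
    refine le_trans (le_of_eq ?_) hold
    unfold TT
    apply lintegral_congr
    intro y
    rw [mul_one, ENNReal.mul_rpow_of_nonneg _ _ (by positivity), mul_right_comm,
      ← ENNReal.rpow_add_of_nonneg _ _ (by positivity) h1s, ← ENNReal.rpow_mul]
    have : s * (1 / s) = 1 := by field_simp
    rw [this]; simp
  calc TT m h x ^ s ≤ (TT m (fun y => h y ^ s) x ^ (1 / s) * 16 ^ (1 - 1 / s)) ^ s := by
        gcongr
        refine e.trans ?_
        gcongr
        exact TT_one m x
    _ = _ := by
        rw [ENNReal.mul_rpow_of_nonneg _ _ hs0.le, ← ENNReal.rpow_mul, ← ENNReal.rpow_mul, mul_comm]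
        have e1 : 1 / s * s = 1 := by field_simp
        have e2 : (1 - 1 / s) * s = s - 1 := by field_simp
        rw [e1, e2, ENNReal.rpow_one]

lemma TT_Lq (m : ℤ) (q : ℝ) (hq : 1 ≤ q) (h : ℝ → ℝ≥0∞) (hh : Measurable h) :
    ∫⁻ x, TT m h x ^ q ≤ 16 ^ q * ∫⁻ x, h x ^ q := by
  calc _ ≤ ∫⁻ x, 16 ^ (q - 1) * TT m (fun y => h y ^ q) x :=
        lintegral_mono fun x => TT_jensen m q hq h hh x
    _ = 16 ^ (q - 1) * ∫⁻ x, TT m (fun y => h y ^ q) x * 1 := by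
        rw [lintegral_const_mul _ (TT_meas m _ (hh.pow_const q))]; simp
    _ = 16 ^ (q - 1) * ∫⁻ x, h x ^ q * TT m (fun _ => 1) x := by
        rw [TT_adj m (fun y => h y ^ q) (fun _ => 1) (hh.pow_const q) measurable_const]
    _ ≤ 16 ^ (q - 1) * ∫⁻ x, h x ^ q * 16 := by
        gcongr with x; exact TT_one m x
    _ = _ := by
        rw [lintegral_mul_const _ (hh.pow_const q)]
        have : (16 : ℝ≥0∞) ^ q = 16 ^ (q - 1) * 16 := by
          conv_rhs =>
            arg 2
            rw [← ENNReal.rpow_one 16]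
          rw [← ENNReal.rpow_add _ _ (by norm_num) (by norm_num)]; simp
        rw [this]; ring

/-- Stein inequality for q at least s -/
lemma stein_large (s q : ℝ) (hs : 1 < s) (hq : s ≤ q) : ∃ C : ℝ≥0∞, C ≠ ∞ ∧
    ∀ (ι : Type) (F : Finset ι) (m : ι → ℤ) (h : ι → ℝ → ℝ≥0∞), (∀ i, Measurable (h i)) →
      ∫⁻ x, (∑ i ∈ F, TT (m i) (h i) x ^ s) ^ (q / s) ≤
        C * ∫⁻ x, (∑ i ∈ F, h i x ^ s) ^ (q / s) := by
  have hs0 : 0 < s := by linarith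
  have hq0 : 0 < q := by linarith
  -- maximal function at the dual exponent, or trivial if q = s
  set t := q / s with ht
  have ht1 : 1 ≤ t := by rw [ht, one_le_div hs0]; exact hq
  have ht0 : 0 < t := by linarith
  -- a weighted bound
  have hMx : ∃ C : ℝ≥0∞, C ≠ ∞ ∧ ∀ H h : ℝ → ℝ≥0∞, Measurable H → Measurable h →
      ∫⁻ x, h x * Mx (fun y => H y ^ (t - 1)) x ≤
        C * ((∫⁻ x, H x ^ t) ^ (1 - 1 / t) * (∫⁻ x, h x ^ t) ^ (1 / t)) := by
    rcases eq_or_lt_of_le ht1 with h1 | h1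
    · refine ⟨2, by norm_num, ?_⟩
      intro H h hH hh
      rw [← h1]
      have : ∀ x, Mx (fun y => H y ^ ((1 : ℝ) - 1)) x ≤ 2 := by
        intro x
        simp only [sub_self, ENNReal.rpow_zero]
        unfold Mx mxA
        apply iSup_le
        intro n
        rw [lintegral_one, Measure.restrict_apply_univ, Real.volume_closedBall,
          ← ENNReal.ofReal_mul (by positivity), mul_left_comm, ← zpow_add₀ (by norm_num)]
        simp
      calc _ ≤ ∫⁻ x, h x * 2 := by gcongr with x; exact this x
        _ = _ := by
          rw [lintegral_mul_const _ hh]; simp [mul_comm]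
    · have ht' : 1 < t / (t - 1) := by rw [one_lt_div (by linarith)]; linarith
      obtain ⟨C, hC, hM⟩ := Mx_strong (t / (t - 1)) ht'
      refine ⟨C ^ (1 - 1 / t), ?_, ?_⟩
      · exact ENNReal.rpow_ne_top_of_nonneg (by rw [sub_nonneg, div_le_one ht0]; exact ht1) hC
      intro H h hH hh
      have hn : 0 ≤ 1 - 1 / t := by rw [sub_nonneg, div_le_one ht0]; exact ht1
      have hold := ENNReal.lintegral_mul_norm_pow_le (μ := volume)
        (f := fun x => Mx (fun y => H y ^ (t - 1)) x ^ (t / (t - 1))) (g := fun x => h x ^ t)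
        ((Mx_meas _ (hH.pow_const _)).pow_const _).aemeasurable (hh.pow_const t).aemeasurable
        hn (by positivity : 0 ≤ 1 / t) (by ring)
      have htt : t - 1 ≠ 0 := by linarith
      calc _ = ∫⁻ x, (Mx (fun y => H y ^ (t - 1)) x ^ (t / (t - 1))) ^ (1 - 1 / t) *
            (h x ^ t) ^ (1 / t) := by
            apply lintegral_congr
            intro x
            rw [← ENNReal.rpow_mul, ← ENNReal.rpow_mul]
            have e1 : t / (t - 1) * (1 - 1 / t) = 1 := by field_simp
            have e2 : t * (1 / t) = 1 := by field_simp
            rw [e1, e2]; simp [mul_comm]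
        _ ≤ _ := hold
        _ ≤ (C * ∫⁻ x, (H x ^ (t - 1)) ^ (t / (t - 1))) ^ (1 - 1 / t) *
            (∫⁻ x, h x ^ t) ^ (1 / t) := by
            gcongr
            exact hM _ (hH.pow_const _)
        _ = _ := by
            rw [ENNReal.mul_rpow_of_nonneg _ _ hn, mul_assoc]
            congr 5
            ext x
            rw [← ENNReal.rpow_mul]
            congr 1
            field_simp
  obtain ⟨C, hC, hM⟩ := hMx
  have c16 : (16 : ℝ≥0∞) ^ (s - 1) ≠ ∞ := ENNReal.rpow_ne_top_of_nonneg (by linarith) (by norm_num)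
  refine ⟨(16 ^ (s - 1) * 8 * C) ^ (1 / (1 / t)) + 1, ?_, ?_⟩
  · refine ENNReal.add_ne_top.2 ⟨?_, by norm_num⟩
    apply ENNReal.rpow_ne_top_of_nonneg (by positivity)
    exact ENNReal.mul_ne_top (ENNReal.mul_ne_top c16 (by norm_num)) hC
  intro ι F m h hh
  set R := ∫⁻ x, (∑ i ∈ F, h i x ^ s) ^ t with hR
  by_cases hRt : R = ∞
  · rw [hRt, ENNReal.mul_top (by simp)]; exact le_top
  refine le_trans ?_ (mul_le_mul_left (le_self_add : (16 ^ (s - 1) * 8 * C) ^ (1 / (1 / t)) ≤ _) R)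
  set H : ℝ → ℝ≥0∞ := fun x => ∑ i ∈ F, TT (m i) (h i) x ^ s with hH
  have hHm : Measurable H :=
    Finset.measurable_sum _ fun i _ => (TT_meas (m i) (h i) (hh i)).pow_const s
  have hfin : ∫⁻ x, H x ^ t ≠ ∞ := by
    have h1 : ∫⁻ x, H x ^ t ≤ ∫⁻ x, (F.card : ℝ≥0∞) ^ (t - 1) * ∑ i ∈ F, TT (m i) (h i) x ^ q := by
      apply lintegral_mono
      intro x
      refine (ENNReal.rpow_sum_le_const_mul_sum_rpow F _ ht1).trans (le_of_eq ?_)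
      congr 1
      apply Finset.sum_congr rfl
      intro i _
      rw [← ENNReal.rpow_mul]
      congr 1
      rw [ht]; field_simp
    refine ne_top_of_le_ne_top ?_ h1
    rw [lintegral_const_mul' _ _ (ENNReal.rpow_ne_top_of_nonneg (by linarith) (by simp)),
      lintegral_finsetSum _ fun i _ => (TT_meas (m i) (h i) (hh i)).pow_const q]
    apply ENNReal.mul_ne_top (ENNReal.rpow_ne_top_of_nonneg (by linarith) (by simp))
    rw [ENNReal.sum_ne_top]
    intro i hi
    refine ne_top_of_le_ne_top ?_ (TT_Lq (m i) q (by linarith) (h i) (hh i))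
    apply ENNReal.mul_ne_top (ENNReal.rpow_ne_top_of_nonneg (by linarith) (by simp))
    refine ne_top_of_le_ne_top hRt ?_
    rw [hR]
    apply lintegral_mono
    intro x
    have e : h i x ^ q = (h i x ^ s) ^ t := by
      rw [← ENNReal.rpow_mul]; congr 1; rw [ht]; field_simp
    beta_reduce
    rw [e]
    gcongr
    exact Finset.single_le_sum (f := fun i => h i x ^ s) (fun _ _ => zero_le) hi
  apply ennreal_cancel _ _ _ _ (by positivity) (by rw [div_le_one ht0]; exact ht1) hfin
  set w : ℝ → ℝ≥0∞ := fun y => H y ^ (t - 1) with hw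
  have hwm : Measurable w := hHm.pow_const _
  calc ∫⁻ x, H x ^ t = ∫⁻ x, ∑ i ∈ F, TT (m i) (h i) x ^ s * w x := by
        apply lintegral_congr
        intro x
        rw [← Finset.sum_mul]
        change _ = H x * H x ^ (t - 1)
        conv_rhs =>
          arg 1
          rw [← ENNReal.rpow_one (H x)]
        rw [← ENNReal.rpow_add_of_nonneg _ _ (by norm_num) (by linarith)]
        congr 1; ring
    _ = ∑ i ∈ F, ∫⁻ x, TT (m i) (h i) x ^ s * w x :=
        lintegral_finsetSum _ fun i _ => ((TT_meas (m i) (h i) (hh i)).pow_const s).mul hwm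
    _ ≤ ∑ i ∈ F, 16 ^ (s - 1) * 8 * ∫⁻ x, h i x ^ s * Mx w x := by
        apply Finset.sum_le_sum
        intro i _
        calc ∫⁻ x, TT (m i) (h i) x ^ s * w x
            ≤ ∫⁻ x, 16 ^ (s - 1) * (TT (m i) (fun y => h i y ^ s) x * w x) := by
              apply lintegral_mono
              intro x
              beta_reduce
              rw [← mul_assoc]
              gcongr
              exact TT_jensen (m i) s hs.le (h i) (hh i) x
          _ = 16 ^ (s - 1) * ∫⁻ x, h i x ^ s * TT (m i) w x := by
              rw [lintegral_const_mul' _ _ c16,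
                TT_adj (m i) (fun y => h i y ^ s) w ((hh i).pow_const s) hwm]
          _ ≤ 16 ^ (s - 1) * ∫⁻ x, 8 * (h i x ^ s * Mx w x) := by
              refine mul_le_mul_right (lintegral_mono fun x => ?_) _
              calc _ ≤ h i x ^ s * (8 * Mx w x) := by gcongr; exact TT_le_Mx _ _ hwm _
                _ = _ := by ring
          _ = _ := by
              rw [lintegral_const_mul' _ _ (by norm_num), mul_assoc]
    _ = 16 ^ (s - 1) * 8 * ∫⁻ x, (∑ i ∈ F, h i x ^ s) * Mx w x := by
        rw [← Finset.mul_sum]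
        congr 1
        have hmm : ∀ i ∈ F, Measurable fun x => h i x ^ s * Mx w x :=
          fun i _ => ((hh i).pow_const s).mul (Mx_meas w hwm)
        rw [← lintegral_finsetSum _ hmm]
        simp_rw [Finset.sum_mul]
    _ ≤ 16 ^ (s - 1) * 8 * (C * ((∫⁻ x, H x ^ t) ^ (1 - 1 / t) * R ^ (1 / t))) :=
        mul_le_mul_right (hM H _ hHm (Finset.measurable_sum _ fun i _ => (hh i).pow_const s)) _
    _ = _ := by ring

lemma ennreal_rpow_sum_le {ι : Type*} (F : Finset ι) (a : ι → ℝ≥0∞) (t : ℝ) (h0 : 0 < t)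
    (h1 : t ≤ 1) : (∑ i ∈ F, a i) ^ t ≤ ∑ i ∈ F, a i ^ t := by
  classical
  induction F using Finset.induction_on with
  | empty => simp [h0]
  | insert i F hi ih =>
    rw [Finset.sum_insert hi, Finset.sum_insert hi]
    exact (ENNReal.rpow_add_le_add_rpow _ _ h0.le h1).trans (by gcongr)

/-- Stein inequality -/
lemma stein (s q : ℝ) (hs : 1 < s) (hq : 1 < q) : ∃ C : ℝ≥0∞, C ≠ ∞ ∧
    ∀ (ι : Type) (F : Finset ι) (m : ι → ℤ) (h : ι → ℝ → ℝ≥0∞), (∀ i, Measurable (h i)) →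
      ∫⁻ x, (∑ i ∈ F, TT (m i) (h i) x ^ s) ^ (q / s) ≤
        C * ∫⁻ x, (∑ i ∈ F, h i x ^ s) ^ (q / s) := by
  rcases le_or_gt s q with hqs | hqs
  · exact stein_large s q hs hqs
  have hs0 : 0 < s := by linarith
  have hq0 : 0 < q := by linarith
  have hs1 : 0 < s - 1 := by linarith
  have hq1 : 0 < q - 1 := by linarith
  set s' := s / (s - 1) with hs'
  set q' := q / (q - 1) with hq'
  have hs'1 : 1 < s' := by rw [hs', one_lt_div hs1]; linarith
  have hsq' : s' ≤ q' := by
    rw [hs', hq', div_le_div_iff₀ hs1 hq1]; nlinarith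
  obtain ⟨C, hC, hL⟩ := stein_large s' q' hs'1 hsq'
  have hq'0 : 0 < q' := by linarith
  have hs'0 : 0 < s' := by linarith
  refine ⟨(C ^ (1 - 1 / q)) ^ (1 / (1 / q)) + 1, ?_, ?_⟩
  · refine ENNReal.add_ne_top.2 ⟨?_, by norm_num⟩
    apply ENNReal.rpow_ne_top_of_nonneg (by positivity)
    exact ENNReal.rpow_ne_top_of_nonneg (by rw [sub_nonneg, div_le_one hq0]; exact hq.le) hC
  intro ι F m h hh
  set t := q / s with ht
  have ht0 : 0 < t := by positivity
  have ht1 : t ≤ 1 := by rw [ht, div_le_one hs0]; exact hqs.le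
  set R := ∫⁻ x, (∑ i ∈ F, h i x ^ s) ^ t with hR
  by_cases hRt : R = ∞
  · rw [hRt, ENNReal.mul_top (by simp)]; exact le_top
  refine le_trans ?_ (mul_le_mul_left (le_self_add : (C ^ (1 - 1 / q)) ^ (1 / (1 / q)) ≤ _) R)
  set H : ℝ → ℝ≥0∞ := fun x => ∑ i ∈ F, TT (m i) (h i) x ^ s with hH
  have hTm : ∀ i, Measurable (TT (m i) (h i)) := fun i => TT_meas (m i) (h i) (hh i)
  have hHm : Measurable H :=
    Finset.measurable_sum _ fun i _ => (hTm i).pow_const s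
  have hfin : ∫⁻ x, H x ^ t ≠ ∞ := by
    have h1 : ∫⁻ x, H x ^ t ≤ ∫⁻ x, ∑ i ∈ F, TT (m i) (h i) x ^ q := by
      apply lintegral_mono
      intro x
      refine (ennreal_rpow_sum_le F _ t ht0 ht1).trans (le_of_eq ?_)
      apply Finset.sum_congr rfl
      intro i _
      rw [← ENNReal.rpow_mul]
      congr 1
      rw [ht]; field_simp
    refine ne_top_of_le_ne_top ?_ h1
    rw [lintegral_finsetSum _ fun i _ => (hTm i).pow_const q]
    rw [ENNReal.sum_ne_top]
    intro i hi
    refine ne_top_of_le_ne_top ?_ (TT_Lq (m i) q (by linarith) (h i) (hh i))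
    apply ENNReal.mul_ne_top (ENNReal.rpow_ne_top_of_nonneg (by linarith) (by simp))
    refine ne_top_of_le_ne_top hRt ?_
    rw [hR]
    apply lintegral_mono
    intro x
    have e : h i x ^ q = (h i x ^ s) ^ t := by
      rw [← ENNReal.rpow_mul]; congr 1; rw [ht]; field_simp
    beta_reduce
    rw [e]
    gcongr
    exact Finset.single_le_sum (f := fun i => h i x ^ s) (fun _ _ => zero_le) hi
  have hae : ∀ᵐ x, H x ≠ ∞ := by
    have := ae_lt_top (hHm.pow_const t) hfin
    filter_upwards [this] with x hx
    intro h0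
    rw [h0, ENNReal.top_rpow_of_pos ht0] at hx
    exact lt_irrefl _ hx
  set g : ι → ℝ → ℝ≥0∞ := fun i x => TT (m i) (h i) x ^ (s - 1) * H x ^ (t - 1) with hg
  have hgm : ∀ i, Measurable (g i) := fun i => ((hTm i).pow_const _).mul (hHm.pow_const _)
  -- pointwise identities
  have hg1 : ∀ x, H x ≠ ∞ → H x ^ t ≤ ∑ i ∈ F, TT (m i) (h i) x * g i x := by
    intro x hx
    by_cases h0 : H x = 0
    · rw [h0, ENNReal.zero_rpow_of_pos ht0]; exact zero_le
    have : ∑ i ∈ F, TT (m i) (h i) x * g i x = H x * H x ^ (t - 1) := by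
      rw [hH]
      simp only
      rw [Finset.sum_mul]
      apply Finset.sum_congr rfl
      intro i _
      simp only [hg]
      rw [← mul_assoc]
      congr 1
      conv_lhs =>
        arg 1
        rw [← ENNReal.rpow_one (TT (m i) (h i) x)]
      rw [← ENNReal.rpow_add_of_nonneg _ _ (by norm_num) (by linarith)]
      congr 1; ring
    rw [this]
    conv_rhs =>
      arg 1
      rw [← ENNReal.rpow_one (H x)]
    rw [← ENNReal.rpow_add _ _ h0 hx]
    apply le_of_eq; congr 1; ring
  have hg2 : ∀ x, H x ≠ ∞ → (∑ i ∈ F, g i x ^ s') ^ (q' / s') ≤ H x ^ t := by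
    intro x hx
    by_cases h0 : H x = 0
    · have : ∀ i ∈ F, g i x = 0 := by
        intro i hi
        have h1 : TT (m i) (h i) x ^ s = 0 := (Finset.sum_eq_zero_iff.1 h0) i hi
        rw [ENNReal.rpow_eq_zero_iff_of_pos hs0] at h1
        simp [hg, h1, hs1]
      rw [Finset.sum_eq_zero fun i hi => by rw [this i hi, ENNReal.zero_rpow_of_pos hs'0],
        ENNReal.zero_rpow_of_pos (by positivity)]
      exact zero_le
    have : ∑ i ∈ F, g i x ^ s' = H x ^ (1 + (t - 1) * s') := by
      rw [ENNReal.rpow_add _ _ h0 hx, ENNReal.rpow_one, ENNReal.rpow_mul]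
      conv_rhs =>
        arg 1
        rw [hH]
      simp only
      rw [Finset.sum_mul]
      apply Finset.sum_congr rfl
      intro i _
      simp only [hg]
      rw [ENNReal.mul_rpow_of_nonneg _ _ hs'0.le, ← ENNReal.rpow_mul]
      congr 2
      rw [hs']; field_simp
    rw [this, ← ENNReal.rpow_mul]
    apply le_of_eq; congr 1
    rw [ht, hs', hq']; field_simp; ring
  set I := ∫⁻ x, H x ^ t with hI
  have hn : 0 ≤ 1 - 1 / q := by rw [sub_nonneg, div_le_one hq0]; exact hq.le
  apply ennreal_cancel _ _ _ _ (by positivity) (by rw [div_le_one hq0]; exact hq.le) hfin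
  have hconj : s.HolderConjugate s' := by
    rw [Real.holderConjugate_iff]
    refine ⟨hs, ?_⟩
    rw [hs']; field_simp; ring
  have hGm : Measurable fun x => ∑ i ∈ F, TT (m i) (g i) x ^ s' :=
    Finset.measurable_sum _ fun i _ => (TT_meas (m i) (g i) (hgm i)).pow_const s'
  have hhm : Measurable fun x => ∑ i ∈ F, h i x ^ s :=
    Finset.measurable_sum _ fun i _ => (hh i).pow_const s
  calc I ≤ ∫⁻ x, ∑ i ∈ F, TT (m i) (h i) x * g i x := by
        apply lintegral_mono_ae
        filter_upwards [hae] with x hx using hg1 x hx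
    _ = ∑ i ∈ F, ∫⁻ x, TT (m i) (h i) x * g i x :=
        lintegral_finsetSum _ fun i _ => (hTm i).mul (hgm i)
    _ = ∑ i ∈ F, ∫⁻ x, h i x * TT (m i) (g i) x := by
        apply Finset.sum_congr rfl
        intro i _
        exact TT_adj (m i) (h i) (g i) (hh i) (hgm i)
    _ = ∫⁻ x, ∑ i ∈ F, h i x * TT (m i) (g i) x :=
        (lintegral_finsetSum _ fun i _ => (hh i).mul (TT_meas (m i) (g i) (hgm i))).symm
    _ ≤ ∫⁻ x, ((∑ i ∈ F, TT (m i) (g i) x ^ s') ^ (q' / s')) ^ (1 - 1 / q) *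
          ((∑ i ∈ F, h i x ^ s) ^ t) ^ (1 / q) := by
        apply lintegral_mono
        intro x
        refine (ENNReal.inner_le_Lp_mul_Lq F _ _ hconj).trans (le_of_eq ?_)
        beta_reduce
        rw [← ENNReal.rpow_mul, ← ENNReal.rpow_mul, mul_comm]
        congr 2
        · rw [hs', hq']; field_simp
        · rw [ht]; field_simp
    _ ≤ (∫⁻ x, (∑ i ∈ F, TT (m i) (g i) x ^ s') ^ (q' / s')) ^ (1 - 1 / q) * R ^ (1 / q) :=
        ENNReal.lintegral_mul_norm_pow_le (hGm.pow_const _).aemeasurable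
          (hhm.pow_const _).aemeasurable hn (by positivity) (by ring)
    _ ≤ (C * I) ^ (1 - 1 / q) * R ^ (1 / q) := by
        gcongr
        refine (hL ι F m g hgm).trans ?_
        gcongr 1
        apply lintegral_mono_ae
        filter_upwards [hae] with x hx using hg2 x hx
    _ = _ := by
        rw [ENNReal.mul_rpow_of_nonneg _ _ hn]; ring



/-- average of F over the k-th dyadic interval at level m -/
def DE (m : ℤ) (F : ℝ → ℂ) (k : ℤ) : ℂ :=
  ((2 : ℝ) ^ m : ℝ) * ∫ y in ((k : ℝ) * (2 : ℝ) ^ (-m))..(((k : ℝ) + 1) * (2 : ℝ) ^ (-m)), F y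

def Ed (m : ℤ) (F : ℝ → ℂ) (x : ℝ) : ℂ := DE m F ⌊(2 : ℝ) ^ m * x⌋

lemma Ed_meas (m : ℤ) (F : ℝ → ℂ) : Measurable (Ed m F) := by
  unfold Ed
  have h : Measurable fun x : ℝ => ⌊(2 : ℝ) ^ m * x⌋ :=
    Int.measurable_floor.comp (measurable_const.mul measurable_id)
  exact (measurable_of_countable (DE m F)).comp h

lemma DE_pair (m : ℤ) (F : ℝ → ℂ) (hF : Continuous F) (k : ℤ) :
    DE (m + 1) F (2 * k) + DE (m + 1) F (2 * k + 1) = 2 * DE m F k := by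
  unfold DE
  rw [← mul_add]
  have e1 : ((2 * k + 1 : ℤ) : ℝ) = ((2 * k : ℤ) : ℝ) + 1 := by push_cast; ring
  rw [e1, intervalIntegral.integral_add_adjacent_intervals
    (hF.intervalIntegrable _ _) (hF.intervalIntegrable _ _)]
  have e2 : (2 : ℝ) ^ (-(m + 1)) = 2 ^ (-m) / 2 := by
    rw [neg_add, zpow_add₀ (by norm_num)]; norm_num; ring
  have e3 : ((2 * k : ℤ) : ℝ) * 2 ^ (-(m + 1)) = (k : ℝ) * 2 ^ (-m) := by
    rw [e2]; push_cast; ring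
  have e4 : (((2 * k : ℤ) : ℝ) + 1 + 1) * 2 ^ (-(m + 1)) = ((k : ℝ) + 1) * 2 ^ (-m) := by
    rw [e2]; push_cast; ring
  rw [e3, e4, zpow_add₀ (by norm_num)]
  push_cast
  ring

/-- swap of the two halves of the dyadic intervals at level m -/
def sw (m : ℤ) (x : ℝ) : ℝ :=
  if Even ⌊(2 : ℝ) ^ (m + 1) * x⌋ then x + 2 ^ (-(m + 1)) else x - 2 ^ (-(m + 1))

lemma sw_floor_even (m : ℤ) (x : ℝ) (h : Even ⌊(2 : ℝ) ^ (m + 1) * x⌋) :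
    ⌊(2 : ℝ) ^ (m + 1) * sw m x⌋ = ⌊(2 : ℝ) ^ (m + 1) * x⌋ + 1 := by
  rw [sw, if_pos h, mul_add, ← zpow_add₀ (by norm_num)]
  simp

lemma sw_floor_odd (m : ℤ) (x : ℝ) (h : ¬ Even ⌊(2 : ℝ) ^ (m + 1) * x⌋) :
    ⌊(2 : ℝ) ^ (m + 1) * sw m x⌋ = ⌊(2 : ℝ) ^ (m + 1) * x⌋ - 1 := by
  rw [sw, if_neg h, mul_sub, ← zpow_add₀ (by norm_num)]
  simp

lemma floor_level (m : ℤ) (j : ℕ) (x : ℝ) :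
    ⌊(2 : ℝ) ^ m * x⌋ = ⌊(2 : ℝ) ^ (m + j) * x⌋ / 2 ^ j := by
  have := Int.floor_div_natCast ((2 : ℝ) ^ (m + j) * x) (2 ^ j)
  push_cast at this
  rw [← this]
  congr 1
  rw [zpow_add₀ (by norm_num), zpow_natCast]
  field_simp

lemma sw_floor (m : ℤ) (j : ℕ) (x : ℝ) :
    ⌊(2 : ℝ) ^ (m - j) * sw m x⌋ = ⌊(2 : ℝ) ^ (m - j) * x⌋ := by
  have h1 := floor_level (m - j) (j + 1)
  have e : (m - j + ((j + 1 : ℕ) : ℤ)) = m + 1 := by push_cast; ring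
  simp_rw [e] at h1
  rw [h1, h1, pow_succ', ← Int.ediv_ediv_of_nonneg (by norm_num),
    ← Int.ediv_ediv_of_nonneg (by norm_num)]
  congr 1
  by_cases h : Even ⌊(2 : ℝ) ^ (m + 1) * x⌋
  · rw [sw_floor_even m x h]; obtain ⟨r, hr⟩ := h; omega
  · rw [sw_floor_odd m x h]; rw [Int.not_even_iff] at h; omega

lemma sw_Ed (m m' : ℤ) (hm : m' ≤ m) (F : ℝ → ℂ) (x : ℝ) : Ed m' F (sw m x) = Ed m' F x := by
  obtain ⟨j, hj⟩ := Int.eq_ofNat_of_zero_le (sub_nonneg.2 hm)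
  have : m' = m - j := by omega
  subst this
  unfold Ed
  rw [sw_floor]

lemma sw_Ed_add (m : ℤ) (F : ℝ → ℂ) (hF : Continuous F) (x : ℝ) :
    Ed (m + 1) F (sw m x) + Ed (m + 1) F x = 2 * Ed m F x := by
  have h1 := floor_level m 1 x
  simp only [Nat.cast_one, pow_one] at h1
  unfold Ed
  rw [h1, ← DE_pair m F hF]
  by_cases h : Even ⌊(2 : ℝ) ^ (m + 1) * x⌋
  · rw [sw_floor_even m x h]
    obtain ⟨r, hr⟩ := h
    rw [hr]
    rw [show (r + r) / 2 = r by omega, add_comm, two_mul]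
  · rw [sw_floor_odd m x h]
    rw [Int.not_even_iff] at h
    set n := ⌊(2 : ℝ) ^ (m + 1) * x⌋
    rw [show 2 * (n / 2) = n - 1 by omega]; simp

lemma sw_mp (m : ℤ) : MeasurePreserving (sw m) volume volume := by
  set h : ℝ := 2 ^ (-(m + 1)) with hh
  set E : Set ℝ := {x | Even ⌊(2 : ℝ) ^ (m + 1) * x⌋} with hE
  have hfl : Measurable fun x : ℝ => ⌊(2 : ℝ) ^ (m + 1) * x⌋ :=
    Int.measurable_floor.comp (measurable_const.mul measurable_id)
  have hEm : MeasurableSet E := by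
    have : E = (fun x : ℝ => ⌊(2 : ℝ) ^ (m + 1) * x⌋) ⁻¹' {n | Even n} := rfl
    rw [this]
    exact hfl (Set.to_countable _).measurableSet
  have hm : Measurable (sw m) := by
    unfold sw
    exact Measurable.ite hEm (measurable_id.add_const _) (measurable_id.sub_const _)
  have hadd : ∀ x, ⌊(2 : ℝ) ^ (m + 1) * (x + h)⌋ = ⌊(2 : ℝ) ^ (m + 1) * x⌋ + 1 := by
    intro x
    rw [mul_add, hh, ← zpow_add₀ (by norm_num)]; simp
  have hsub : ∀ x, ⌊(2 : ℝ) ^ (m + 1) * (x - h)⌋ = ⌊(2 : ℝ) ^ (m + 1) * x⌋ - 1 := by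
    intro x
    rw [mul_sub, hh, ← zpow_add₀ (by norm_num)]; simp
  refine ⟨hm, ?_⟩
  ext A hA
  rw [Measure.map_apply hm hA, ← measure_inter_add_sdiff _ hEm]
  have e1 : sw m ⁻¹' A ∩ E = (fun x => x + h) ⁻¹' (A \ E) := by
    ext x
    simp only [Set.mem_inter_iff, Set.mem_preimage, Set.mem_sdiff, hE, Set.mem_ofPred_eq, hadd,
      Int.even_add_one, not_not]
    constructor
    · rintro ⟨h1, h2⟩
      rw [sw, if_pos h2] at h1; exact ⟨h1, h2⟩
    · rintro ⟨h1, h2⟩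
      refine ⟨?_, h2⟩
      rw [sw, if_pos h2]; exact h1
  have e2 : sw m ⁻¹' A \ E = (fun x => x - h) ⁻¹' (A ∩ E) := by
    ext x
    simp only [Set.mem_inter_iff, Set.mem_preimage, Set.mem_sdiff, hE, Set.mem_ofPred_eq, hsub,
      Int.even_sub_one]
    constructor
    · rintro ⟨h1, h2⟩
      rw [sw, if_neg h2] at h1; exact ⟨h1, h2⟩
    · rintro ⟨h1, h2⟩
      refine ⟨?_, h2⟩
      rw [sw, if_neg h2]; exact h1
  rw [e1, e2, measure_preimage_add_right]
  have : volume ((fun x => x - h) ⁻¹' (A ∩ E)) = volume (A ∩ E) := by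
    simp_rw [sub_eq_add_neg]
    exact measure_preimage_add_right _ _ _
  rw [this, add_comm, measure_inter_add_sdiff _ hEm]



open scoped ContDiff in
lemma kern_exists (a b : ℝ) (ha : 0 < a) (hab : a < b) :
    ∃ ψ φ : SchwartzMap ℝ ℂ, (∀ x, HasDerivAt ψ (φ x) x) ∧
      ∀ ξ : ℝ, a < |ξ| → |ξ| < b → 𝓕 (φ : ℝ → ℂ) ξ = 1 := by
  let B1 : ContDiffBump (0:ℝ) := ⟨b, b + 1, by linarith, by linarith⟩
  let B2 : ContDiffBump (0:ℝ) := ⟨a / 2, a, by linarith, by linarith⟩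
  let χ : ℝ → ℂ := fun ξ => ((B1 ξ * (1 - B2 ξ) : ℝ) : ℂ) * (2 * Real.pi * Complex.I * (ξ : ℂ))⁻¹
  have hcs : HasCompactSupport χ := by
    have h1 : HasCompactSupport (fun ξ => B1 ξ) := B1.hasCompactSupport
    refine h1.mono' ?_
    intro ξ hξ
    apply subset_closure
    simp only [Function.mem_support, χ] at hξ ⊢
    intro h
    apply hξ
    simp [h]
  have hof : ContDiff ℝ ∞ (fun x : ℝ => (x : ℂ)) := Complex.ofRealCLM.contDiff
  have hsm : ContDiff ℝ ∞ χ := by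
    rw [contDiff_iff_contDiffAt]
    intro ξ
    by_cases h0 : ξ = 0
    · subst h0
      have : χ =ᶠ[nhds 0] fun _ => 0 := by
        filter_upwards [B2.eventuallyEq_one] with x hx
        simp only [χ]
        have : B2 x = 1 := by simpa using hx
        simp [this]
      exact contDiffAt_const.congr_of_eventuallyEq this
    · apply ContDiffAt.mul
      · apply hof.contDiffAt.comp
        exact (B1.contDiff.mul (contDiff_const.sub B2.contDiff)).contDiffAt
      · apply ContDiffAt.inv
        · exact contDiffAt_const.mul hof.contDiffAt
        · simp [h0, Real.pi_ne_zero, Complex.I_ne_zero]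
  let X : SchwartzMap ℝ ℂ := hcs.toSchwartzMap hsm
  let ψ : SchwartzMap ℝ ℂ := 𝓕⁻ X
  let φ : SchwartzMap ℝ ℂ := SchwartzMap.derivCLM ℂ ℂ ψ
  refine ⟨ψ, φ, fun x => ψ.hasDerivAt x, ?_⟩
  intro ξ h1 h2
  have e1 : (φ : ℝ → ℂ) = deriv ψ := rfl
  have hd : Integrable (deriv ψ) := e1 ▸ φ.integrable
  rw [e1, Real.fourier_deriv ψ.integrable ψ.differentiable hd]
  have e2 : 𝓕 (ψ : ℝ → ℂ) = χ := by
    rw [← SchwartzMap.fourier_coe]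
    simp only [ψ, FourierTransform.fourier_fourierInv_eq]
    rfl
  have hb1 : B1 ξ = 1 := by
    apply B1.one_of_mem_closedBall
    simp [B1, h2.le]
  have hb2 : B2 ξ = 0 := by
    apply B2.zero_of_le_dist
    simp [B2, h1.le]
  have h0 : (ξ : ℂ) ≠ 0 := by
    have : ξ ≠ 0 := abs_pos.mp (ha.trans h1)
    exact_mod_cast this
  simp only [e2, χ, hb1, hb2, smul_eq_mul]
  have : (2 * Real.pi * Complex.I * (ξ : ℂ)) ≠ 0 := by simp [h0, Real.pi_ne_zero]
  rw [sub_zero, mul_one, Complex.ofReal_one, one_mul, mul_inv_cancel₀ this]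

lemma reproducing (φ f : SchwartzMap ℝ ℂ) (s : ℝ) (hs : 0 < s)
    (h : ∀ ξ, 𝓕 (f : ℝ → ℂ) ξ ≠ 0 → 𝓕 (φ : ℝ → ℂ) (s⁻¹ * ξ) = 1) (y : ℝ) :
    f y = ∫ w, f w * ((s : ℂ) * φ (s * (y - w))) := by
  let X : SchwartzMap ℝ ℂ := 𝓕 φ
  have hX : (X : ℝ → ℂ) = 𝓕 (φ : ℝ → ℂ) := SchwartzMap.fourier_coe φ
  have hXi : 𝓕⁻ (X : ℝ → ℂ) = φ := by
    rw [← SchwartzMap.fourierInv_coe]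
    simp only [X, FourierTransform.fourierInv_fourier_eq]
  let g : ℝ → ℂ := fun ξ => Complex.exp ((2 * Real.pi * (ξ * y) : ℝ) * Complex.I) * X (s⁻¹ * ξ)
  have hXint : Integrable (fun ξ => X (s⁻¹ * ξ)) :=
    X.integrable.comp_mul_left' (inv_ne_zero hs.ne')
  have hg : Integrable g := by
    apply hXint.bdd_mul (c := 1)
    · apply Continuous.aestronglyMeasurable
      fun_prop
    · filter_upwards with ξ
      rw [Complex.norm_exp_ofReal_mul_I]
  have h1 : f y = ∫ ξ, 𝓕 (f : ℝ → ℂ) ξ * g ξ := by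
    have e : f y = 𝓕⁻ (𝓕 (f : ℝ → ℂ)) y := by
      rw [← SchwartzMap.fourier_coe, ← SchwartzMap.fourierInv_coe,
        FourierTransform.fourierInv_fourier_eq]
    rw [e, Real.fourierInv_eq']
    apply integral_congr_ae
    filter_upwards with ξ
    simp only [g, smul_eq_mul]
    by_cases h0 : 𝓕 (f : ℝ → ℂ) ξ = 0
    · simp [h0]
    · have := h ξ h0
      rw [← hX] at this
      rw [this, mul_one, mul_comm]
      congr 4
      simp [mul_comm]
  have h2 := VectorFourier.integral_fourierIntegral_smul_eq_flip (e := Real.fourierChar)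
    (L := innerₗ ℝ) (μ := volume) (ν := volume) (f := (f : ℝ → ℂ)) (g := g)
    Real.continuous_fourierChar continuous_inner f.integrable hg
  have h3 : ∀ w, 𝓕 g w = (s : ℂ) * φ (s * (y - w)) := by
    intro w
    rw [Real.fourier_eq']
    have e1 : ∀ v : ℝ, Complex.exp (((-2 * Real.pi * inner ℝ v w : ℝ) : ℂ) * Complex.I) • g v
        = (fun u => Complex.exp (((2 * Real.pi * (u * (s * (y - w))) : ℝ) : ℂ) * Complex.I)
          • X u) (s⁻¹ * v) := by
      intro v
      simp only [g, smul_eq_mul]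
      rw [← mul_assoc, ← Complex.exp_add]
      congr 2
      have : s⁻¹ * v * (s * (y - w)) = v * (y - w) := by field_simp
      rw [this]
      simp
      ring
    simp_rw [e1]
    rw [Measure.integral_comp_mul_left (fun u => Complex.exp (((2 * Real.pi * (u * (s * (y - w))) : ℝ) : ℂ) * Complex.I) • X u) s⁻¹]
    rw [inv_inv, abs_of_pos hs, ← hXi, Real.fourierInv_eq']
    rw [Complex.real_smul]
    congr 1
    apply integral_congr_ae
    filter_upwards with u
    congr 4
    simp [mul_comm]
  rw [h1]
  rw [flip_innerₗ] at h2
  calc _ = ∫ x, f x • 𝓕 g x := h2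
    _ = _ := by simp_rw [h3, smul_eq_mul]



lemma sch_bound (g : SchwartzMap ℝ ℂ) : ∃ C : ℝ, 0 < C ∧ ∀ z, ‖g z‖ ≤ C / (1 + |z|) ^ 2 := by
  obtain ⟨C0, h0, hC0⟩ := g.decay 0 0
  obtain ⟨C2, h2, hC2⟩ := g.decay 2 0
  refine ⟨2 * (C0 + C2), by linarith, fun z => ?_⟩
  have a0 := hC0 z
  have a2 := hC2 z
  simp only [pow_zero, one_mul, norm_iteratedFDeriv_zero, Real.norm_eq_abs] at a0 a2
  rw [le_div_iff₀ (by positivity)]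
  have : (1 + |z|) ^ 2 ≤ 2 * (1 + |z| ^ 2) := by nlinarith [sq_nonneg (1 - |z|)]
  calc ‖g z‖ * (1 + |z|) ^ 2 ≤ ‖g z‖ * (2 * (1 + |z| ^ 2)) := by gcongr
    _ = 2 * (‖g z‖ + |z| ^ 2 * ‖g z‖) := by ring
    _ ≤ _ := by linarith

lemma sch_lip (g : SchwartzMap ℝ ℂ) : ∃ C : ℝ, 0 < C ∧ ∀ a b : ℝ, |a - b| ≤ 1 →
    ‖g a - g b‖ ≤ C * |a - b| / (1 + |b|) ^ 2 := by
  obtain ⟨C, hC, h⟩ := sch_bound (SchwartzMap.derivCLM ℂ ℂ g)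
  refine ⟨4 * C, by linarith, fun a b hab => ?_⟩
  have := Convex.norm_image_sub_le_of_norm_hasDerivWithin_le (f := g) (f' := deriv g)
    (s := Set.uIcc b a) (C := 4 * C / (1 + |b|) ^ 2) (x := b) (y := a)
    (fun x _ => (g.hasDerivAt x).hasDerivWithinAt) (fun x hx => ?_) (convex_uIcc b a)
    Set.left_mem_uIcc Set.right_mem_uIcc
  · rw [Real.norm_eq_abs] at this
    refine this.trans (le_of_eq (by ring))
  · refine (h x).trans ?_
    have h1 : |x - b| ≤ 1 := (Set.abs_sub_left_of_mem_uIcc hx).trans hab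
    have h2 : 1 + |b| ≤ 2 * (1 + |x|) := by
      have : |b| ≤ |x| + |x - b| := by
        have := abs_sub x (x - b); simpa using this
      linarith [abs_nonneg x]
    rw [div_le_div_iff₀ (by positivity) (by positivity)]
    have : (1 + |b|) ^ 2 ≤ (2 * (1 + |x|)) ^ 2 := by gcongr
    nlinarith

lemma conv_integrable (f φ : SchwartzMap ℝ ℂ) (s y : ℝ) :
    Integrable fun w => f w * ((s : ℂ) * φ (s * (y - w))) := by
  obtain ⟨C, hC, h⟩ := sch_bound φ
  apply f.integrable.mul_bdd (c := |s| * C)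
  · apply Continuous.aestronglyMeasurable
    have := φ.continuous
    fun_prop
  · filter_upwards with w
    rw [norm_mul, Complex.norm_real, Real.norm_eq_abs]
    gcongr
    refine (h _).trans (div_le_self hC.le ?_)
    have := abs_nonneg (s * (y - w))
    nlinarith

lemma osc_bound (φ : SchwartzMap ℝ ℂ) : ∃ C : ℝ, 0 < C ∧ ∀ (i m : ℤ) (f : SchwartzMap ℝ ℂ),
    i ≤ m → (∀ y, f y = ∫ w, f w * ((((2 : ℝ) ^ i : ℝ) : ℂ) * φ ((2 : ℝ) ^ i * (y - w)))) →
    ∀ x y : ℝ, |y - x| ≤ 2 ^ (-m) →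
    ‖f y - f x‖ₑ ≤ ENNReal.ofReal (C * 2 ^ (i - m)) * TT i (fun w => ‖f w‖ₑ) x := by
  obtain ⟨C, hC, h⟩ := sch_lip φ
  refine ⟨C, hC, fun i m f him hrep x y hxy => ?_⟩
  have hs : (0:ℝ) < 2 ^ i := by positivity
  rw [hrep y, hrep x, ← integral_sub (conv_integrable _ _ _ _) (conv_integrable _ _ _ _)]
  refine (enorm_integral_le_lintegral_enorm _).trans ?_
  unfold TT
  rw [← lintegral_const_mul _ (kap_mul_meas i x _ f.continuous.enorm.measurable)]
  apply lintegral_mono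
  intro w
  beta_reduce
  have hb : |(2:ℝ) ^ i * (y - w) - 2 ^ i * (x - w)| ≤ 2 ^ (i - m) := by
    rw [← mul_sub, abs_mul, abs_of_pos hs, zpow_sub₀ (by norm_num), div_eq_mul_inv, ← zpow_neg]
    gcongr
    simpa using hxy
  have hb1 : (2:ℝ) ^ (i - m) ≤ 1 := zpow_le_one_of_nonpos₀ (by norm_num) (by omega)
  have := h _ _ (hb.trans hb1)
  rw [← mul_sub, ← mul_sub, enorm_mul, mul_comm, ← mul_assoc]
  gcongr
  rw [← ofReal_norm, kap, ← ENNReal.ofReal_mul (by positivity)]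
  apply ENNReal.ofReal_le_ofReal
  rw [norm_mul, Complex.norm_real, Real.norm_of_nonneg hs.le]
  rw [abs_mul (2 ^ i) (x - w), abs_of_pos hs] at this
  calc _ ≤ (2:ℝ) ^ i * (C * |(2:ℝ) ^ i * (y - w) - 2 ^ i * (x - w)| / (1 + 2 ^ i * |x - w|) ^ 2) := by
        gcongr
    _ ≤ (2:ℝ) ^ i * (C * 2 ^ (i - m) / (1 + 2 ^ i * |x - w|) ^ 2) := by gcongr
    _ = _ := by ring

lemma floor_endpoints (m : ℤ) (x : ℝ) :
    (⌊(2 : ℝ) ^ m * x⌋ : ℝ) * 2 ^ (-m) ≤ x ∧ x ≤ ((⌊(2 : ℝ) ^ m * x⌋ : ℝ) + 1) * 2 ^ (-m) := by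
  have h2 : (0:ℝ) < 2 ^ m := by positivity
  rw [zpow_neg]
  constructor
  · rw [← div_eq_mul_inv, div_le_iff₀ h2, mul_comm x]
    exact Int.floor_le _
  · rw [← div_eq_mul_inv, le_div_iff₀ h2, mul_comm x]
    exact (Int.lt_floor_add_one _).le

lemma Ed_osc (m : ℤ) (f : ℝ → ℂ) (hf : Continuous f) (x : ℝ) (D : ℝ≥0∞)
    (h : ∀ y, |y - x| ≤ 2 ^ (-m) → ‖f y - f x‖ₑ ≤ D) : ‖f x - Ed m f x‖ₑ ≤ D := by
  by_cases hD : D = ∞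
  · simp [hD]
  obtain ⟨h1, h2⟩ := floor_endpoints m x
  set a := (⌊(2 : ℝ) ^ m * x⌋ : ℝ) * 2 ^ (-m) with ha
  set b := ((⌊(2 : ℝ) ^ m * x⌋ : ℝ) + 1) * 2 ^ (-m) with hb
  have hba : b - a = 2 ^ (-m) := by rw [ha, hb]; ring
  have hpos : (0:ℝ) < 2 ^ m := by positivity
  have e : f x - Ed m f x = -((((2:ℝ) ^ m : ℝ) : ℂ) * ∫ y in a..b, (f y - f x)) := by
    rw [intervalIntegral.integral_sub (hf.intervalIntegrable _ _) (by simp),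
      intervalIntegral.integral_const, hba, Ed, DE, ← ha, ← hb, Complex.real_smul, mul_sub,
      ← mul_assoc, ← Complex.ofReal_mul, zpow_neg, mul_inv_cancel₀ hpos.ne']
    simp
  have hb2 : ‖∫ y in a..b, (f y - f x)‖ ≤ D.toReal * |b - a| := by
    apply intervalIntegral.norm_integral_le_of_norm_le_const
    intro y hy
    rw [Set.uIoc_of_le (by linarith)] at hy
    have := h y (by rw [abs_le, ← hba]; constructor <;> linarith [hy.1, hy.2])
    rw [← toReal_enorm]
    exact ENNReal.toReal_mono hD this
  rw [e, enorm_neg, ← ofReal_norm, norm_mul, Complex.norm_real, Real.norm_of_nonneg hpos.le]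
  apply ENNReal.ofReal_le_of_le_toReal
  rw [hba, abs_of_pos (by positivity), zpow_neg] at hb2
  calc _ ≤ (2:ℝ) ^ m * (D.toReal * (2 ^ m)⁻¹) := by gcongr
    _ = _ := by field_simp

lemma prim_bound (ψ : SchwartzMap ℝ ℂ) : ∃ C : ℝ, 0 < C ∧ ∀ (i : ℤ) (f : SchwartzMap ℝ ℂ) (c : ℝ),
    ‖∫ w, f w * ψ ((2:ℝ) ^ i * (c - w))‖ₑ ≤
      ENNReal.ofReal (C * 2 ^ (-i)) * TT i (fun w => ‖f w‖ₑ) c := by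
  obtain ⟨C, hC, h⟩ := sch_bound ψ
  refine ⟨C, hC, fun i f c => ?_⟩
  refine (enorm_integral_le_lintegral_enorm _).trans ?_
  unfold TT
  rw [← lintegral_const_mul _ (kap_mul_meas i c _ f.continuous.enorm.measurable)]
  apply lintegral_mono
  intro w
  beta_reduce
  rw [enorm_mul, mul_comm, ← mul_assoc]
  gcongr
  rw [← ofReal_norm, kap, ← ENNReal.ofReal_mul (by positivity)]
  apply ENNReal.ofReal_le_ofReal
  have hs : (0:ℝ) < 2 ^ i := by positivity
  refine (h _).trans ?_
  rw [abs_mul, abs_of_pos hs, zpow_neg]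
  apply le_of_eq
  field_simp

lemma prim_deriv (ψ φ f : SchwartzMap ℝ ℂ) (hψ : ∀ x, HasDerivAt ψ (φ x) x) (s : ℝ)
    (hrep : ∀ y, f y = ∫ w, f w * ((s : ℂ) * φ (s * (y - w)))) (c : ℝ) :
    HasDerivAt (fun c => ∫ w, f w * ψ (s * (c - w))) (f c) c := by
  obtain ⟨C, hC, h⟩ := sch_bound φ
  obtain ⟨C', hC', h'⟩ := sch_bound ψ
  rw [hrep c]
  refine (hasDerivAt_integral_of_dominated_loc_of_deriv_le (s := Set.univ)
    (F := fun c w => f w * ψ (s * (c - w)))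
    (F' := fun c w => f w * ((s : ℂ) * φ (s * (c - w))))
    (bound := fun w => ‖f w‖ * (|s| * C)) Filter.univ_mem ?_ ?_ ?_ ?_ ?_ ?_).2
  · filter_upwards with c
    apply Continuous.aestronglyMeasurable
    have := ψ.continuous
    have := f.continuous
    fun_prop
  · apply f.integrable.mul_bdd (c := C')
    · apply Continuous.aestronglyMeasurable
      have := ψ.continuous
      fun_prop
    · filter_upwards with w
      refine (h' _).trans (div_le_self hC'.le ?_)
      have := abs_nonneg (s * (c - w))
      nlinarith
  · exact (conv_integrable f φ s c).aestronglyMeasurable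
  · filter_upwards with w
    intro x _
    rw [norm_mul, norm_mul, Complex.norm_real, Real.norm_eq_abs]
    gcongr
    refine (h _).trans (div_le_self hC.le ?_)
    have := abs_nonneg (s * (x - w))
    nlinarith
  · exact f.integrable.norm.mul_const _
  · filter_upwards with w
    intro x _
    have h1 : HasDerivAt (fun x : ℝ => s * (x - w)) s x := by
      simpa using ((hasDerivAt_id x).sub_const w).const_mul s
    have := (HasDerivAt.scomp x (hψ _) h1).const_mul (f w)
    simpa [Complex.real_smul] using! this

lemma TT_move (i m : ℤ) (him : m ≤ i) (h : ℝ → ℝ≥0∞) (hh : Measurable h) (c x : ℝ)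
    (hc : |c - x| ≤ 2 ^ (-m)) :
    TT i h c ≤ ENNReal.ofReal (4 * 2 ^ (i - m)) * TT m h x := by
  unfold TT
  rw [← lintegral_const_mul _ (kap_mul_meas m x _ hh)]
  apply lintegral_mono
  intro w
  beta_reduce
  rw [← mul_assoc]
  gcongr
  rw [kap, kap, ← ENNReal.ofReal_mul (by positivity)]
  apply ENNReal.ofReal_le_ofReal
  have hm : (0:ℝ) < 2 ^ m := by positivity
  have hmi : (2:ℝ) ^ m ≤ 2 ^ i := zpow_le_zpow_right₀ (by norm_num) him
  have e : (2:ℝ) ^ (i - m) * 2 ^ m = 2 ^ i := by rw [← zpow_add₀ (by norm_num)]; congr 1; ring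
  have h1 : 1 + 2 ^ m * |x - w| ≤ 2 * (1 + 2 ^ i * |c - w|) := by
    have a1 : |x - w| ≤ |c - w| + |c - x| := by
      have := abs_sub (c - w) (c - x); simpa using this
    have a2 : 2 ^ m * |c - x| ≤ 1 := by
      calc (2:ℝ) ^ m * |c - x| ≤ 2 ^ m * 2 ^ (-m) := by gcongr
        _ = 1 := by rw [zpow_neg, mul_inv_cancel₀ hm.ne']
    have a3 : (2:ℝ) ^ m * |c - w| ≤ 2 ^ i * |c - w| := by gcongr
    have a4 := mul_le_mul_of_nonneg_left a1 hm.le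
    have a5 : 0 ≤ (2:ℝ) ^ i * |c - w| := by positivity
    linarith
  have h2 : (1 + 2 ^ m * |x - w|) ^ 2 ≤ 4 * (1 + 2 ^ i * |c - w|) ^ 2 := by
    calc _ ≤ (2 * (1 + 2 ^ i * |c - w|)) ^ 2 := by gcongr
      _ = _ := by ring
  rw [mul_div_assoc', mul_assoc, e, div_le_div_iff₀ (by positivity) (by positivity)]
  have : (0:ℝ) < 2 ^ i := by positivity
  nlinarith



def ee (m i : ℤ) (f : ℝ → ℂ) (x : ℝ) : ℝ≥0∞ :=
  if i ≤ m then ‖f x - Ed m f x‖ₑ else ‖Ed m f x‖ₑ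

/-- exponential weight -/
def wt (ε : ℝ) (n : ℤ) : ℝ≥0∞ := ENNReal.ofReal ((2 : ℝ) ^ (-(ε * |(n : ℝ)|)))

lemma TT_root (m : ℤ) (r : ℝ) (hr : 1 < r) (h : ℝ → ℝ≥0∞) (hh : Measurable h) (x : ℝ) :
    TT m h x ≤ 16 * (TT m (fun y => h y ^ r) x) ^ (1 / r) := by
  have hr0 : 0 < r := by linarith
  have h1 := TT_jensen m r hr.le h hh x
  have h2 : (TT m h x ^ r) ^ (1 / r) ≤ (16 ^ (r - 1) * TT m (fun y => h y ^ r) x) ^ (1 / r) :=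
    ENNReal.rpow_le_rpow h1 (by positivity)
  rw [← ENNReal.rpow_mul, mul_one_div_cancel hr0.ne', ENNReal.rpow_one,
    ENNReal.mul_rpow_of_nonneg _ _ (by positivity), ← ENNReal.rpow_mul] at h2
  refine h2.trans ?_
  gcongr
  calc (16 : ℝ≥0∞) ^ ((r - 1) * (1 / r)) ≤ 16 ^ (1 : ℝ) := by
        apply ENNReal.rpow_le_rpow_of_exponent_le (by norm_num)
        rw [mul_one_div, div_le_one hr0]; linarith
    _ = 16 := by simp

lemma ee_bound (Nb : ℝ) (hNb : 0 < Nb) (r : ℝ) (hr : 1 < r) : ∃ C : ℝ≥0∞, C ≠ ∞ ∧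
    ∀ (i m : ℤ) (f : SchwartzMap ℝ ℂ), (∀ ξ : ℝ, 𝓕 (⇑f) ξ ≠ 0 →
    (2 : ℝ) ^ ((i : ℝ) - Nb) < |ξ| ∧ |ξ| < (2 : ℝ) ^ ((i : ℝ) + Nb)) → ∀ x,
    ee m i f x ≤ C * wt (1 - 1 / r) (m - i) * (TT (min m i) (fun y => ‖f y‖ₑ ^ r) x) ^ (1 / r) := by
  have hr0 : 0 < r := by linarith
  have hr1 : 1 / r < 1 := by rw [div_lt_one hr0]; exact hr
  have hr1' : 0 < 1 / r := by positivity
  obtain ⟨ψ, φ, hψ, hφ⟩ := kern_exists ((2 : ℝ) ^ (-Nb)) ((2 : ℝ) ^ Nb) (by positivity)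
    (Real.rpow_lt_rpow_of_exponent_lt (by norm_num) (by linarith))
  obtain ⟨C1, hC1, h1⟩ := osc_bound φ
  obtain ⟨C2, hC2, h2⟩ := prim_bound ψ
  refine ⟨16 * ENNReal.ofReal (C1 + 8 * C2), ENNReal.mul_ne_top (by norm_num) ENNReal.ofReal_ne_top,
    fun i m f hf x => ?_⟩
  have hm : Measurable fun y => ‖f y‖ₑ := f.continuous.enorm.measurable
  have hrep : ∀ y, f y = ∫ w, f w * ((((2 : ℝ) ^ i : ℝ) : ℂ) * φ ((2 : ℝ) ^ i * (y - w))) := by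
    apply reproducing φ f _ (by positivity)
    intro ξ hξ
    obtain ⟨a, b⟩ := hf ξ hξ
    have hs : (0:ℝ) < 2 ^ i := by positivity
    rw [sub_eq_add_neg, Real.rpow_add (by norm_num), Real.rpow_intCast] at a
    rw [Real.rpow_add (by norm_num), Real.rpow_intCast] at b
    apply hφ
    · rw [abs_mul, abs_of_pos (inv_pos.mpr hs), ← div_eq_inv_mul, lt_div_iff₀ hs]; linarith
    · rw [abs_mul, abs_of_pos (inv_pos.mpr hs), ← div_eq_inv_mul, div_lt_iff₀ hs]; linarith
  unfold ee wt
  split_ifs with him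
  · rw [min_eq_right him]
    refine (Ed_osc m f f.continuous x _ (fun y hy => h1 i m f him hrep x y hy)).trans ?_
    refine (mul_le_mul_right (TT_root i r hr _ hm x) _).trans ?_
    rw [← mul_assoc]
    refine mul_le_mul_left ?_ _
    rw [mul_comm, mul_assoc 16]
    refine mul_le_mul_right ?_ _
    rw [← ENNReal.ofReal_mul (by positivity)]
    apply ENNReal.ofReal_le_ofReal
    have him' : (i : ℝ) ≤ m := by exact_mod_cast him
    have : (2:ℝ) ^ (i - m) ≤ (2:ℝ) ^ (-((1 - 1 / r) * |((m - i : ℤ) : ℝ)|)) := by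
      rw [← Real.rpow_intCast]
      apply Real.rpow_le_rpow_of_exponent_le (by norm_num)
      push_cast
      rw [abs_of_nonneg (by linarith)]
      nlinarith
    gcongr
    linarith
  · have him' : m ≤ i := by omega
    rw [min_eq_left him']
    have hd : ∀ c, HasDerivAt (fun c => ∫ w, f w * ψ ((2:ℝ) ^ i * (c - w))) (f c) c :=
      fun c => prim_deriv ψ φ f hψ ((2:ℝ) ^ i) hrep c
    set G := (fun c => ∫ w, f w * ψ ((2:ℝ) ^ i * (c - w))) with hG
    obtain ⟨ha, hb⟩ := floor_endpoints m x
    have hG2 : ∀ c, |c - x| ≤ 2 ^ (-m) → ‖G c‖ₑ ≤ ENNReal.ofReal (C2 * 2 ^ (-i)) *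
        (16 * (ENNReal.ofReal (4 * 2 ^ (i - m)) * TT m (fun w => ‖f w‖ₑ ^ r) x) ^ (1 / r)) := by
      intro c hc
      refine (h2 i f c).trans ?_
      refine mul_le_mul_right ((TT_root i r hr _ hm c).trans ?_) _
      refine mul_le_mul_right (ENNReal.rpow_le_rpow ?_ hr1'.le) _
      exact TT_move i m him' _ (hm.pow_const r) c x hc
    unfold Ed DE
    set a := (⌊(2 : ℝ) ^ m * x⌋ : ℝ) * 2 ^ (-m) with haa
    set b := ((⌊(2 : ℝ) ^ m * x⌋ : ℝ) + 1) * 2 ^ (-m) with hbb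
    have hba : b - a = 2 ^ (-m) := by rw [haa, hbb]; ring
    have hga := hG2 a (by rw [abs_le, ← hba]; constructor <;> linarith)
    have hgb := hG2 b (by rw [abs_le, ← hba]; constructor <;> linarith)
    rw [intervalIntegral.integral_eq_sub_of_hasDerivAt (f := G) (fun c _ => hd c)
      (f.continuous.intervalIntegrable _ _), enorm_mul]
    have hpos : (0:ℝ) < 2 ^ m := by positivity
    have e1 : ‖(((2:ℝ) ^ m : ℝ) : ℂ)‖ₑ = ENNReal.ofReal (2 ^ m) := by
      rw [← ofReal_norm, Complex.norm_real, Real.norm_of_nonneg hpos.le]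
    rw [e1]
    calc _ ≤ ENNReal.ofReal (2 ^ m) * (‖G b‖ₑ + ‖G a‖ₑ) := mul_le_mul_right enorm_sub_le _
      _ ≤ ENNReal.ofReal (2 ^ m) * (2 * (ENNReal.ofReal (C2 * 2 ^ (-i)) *
        (16 * (ENNReal.ofReal (4 * 2 ^ (i - m)) * TT m (fun w => ‖f w‖ₑ ^ r) x) ^ (1 / r)))) := by
          rw [two_mul]
          exact mul_le_mul_right (add_le_add hgb hga) _
      _ = 16 * ENNReal.ofReal (2 ^ m * (2 * (C2 * 2 ^ (-i))) * (4 * 2 ^ (i - m)) ^ (1 / r)) *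
            TT m (fun w => ‖f w‖ₑ ^ r) x ^ (1 / r) := by
          have q1 : ENNReal.ofReal (2 ^ m * (2 * (C2 * 2 ^ (-i))) * (4 * 2 ^ (i - m)) ^ (1 / r)) =
              ENNReal.ofReal (2 ^ m) * (2 * ENNReal.ofReal (C2 * 2 ^ (-i))) *
                ENNReal.ofReal (4 * 2 ^ (i - m)) ^ (1 / r) := by
            rw [ENNReal.ofReal_mul (by positivity),
              ENNReal.ofReal_mul (by positivity), ENNReal.ofReal_mul (p := 2) (by positivity),
              ENNReal.ofReal_rpow_of_nonneg (by positivity) hr1'.le, ENNReal.ofReal_ofNat]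
          rw [q1, ENNReal.mul_rpow_of_nonneg _ _ hr1'.le]
          ring
      _ ≤ _ := by
          refine mul_le_mul_left ?_ _
          rw [mul_assoc 16]
          refine mul_le_mul_right ?_ _
          rw [← ENNReal.ofReal_mul (by positivity)]
          apply ENNReal.ofReal_le_ofReal
          have him'' : (m : ℝ) ≤ i := by exact_mod_cast him'
          have e : (2:ℝ) ^ (-((1 - 1 / r) * |((m - i : ℤ) : ℝ)|)) =
              2 ^ m * 2 ^ (-i) * ((2:ℝ) ^ (i - m)) ^ (1 / r) := by
            rw [← Real.rpow_intCast, ← Real.rpow_intCast, ← Real.rpow_intCast,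
              ← Real.rpow_mul (by norm_num), ← Real.rpow_add (by norm_num),
              ← Real.rpow_add (by norm_num)]
            congr 1
            push_cast
            rw [abs_of_nonpos (by linarith)]
            ring
          rw [e, Real.mul_rpow (by norm_num) (by positivity)]
          have h4 : (4:ℝ) ^ (1 / r) ≤ 4 := by
            calc (4:ℝ) ^ (1 / r) ≤ 4 ^ (1:ℝ) :=
                  Real.rpow_le_rpow_of_exponent_le (by norm_num) hr1.le
              _ = 4 := by simp
          set Z := (2:ℝ) ^ m * 2 ^ (-i) * ((2:ℝ) ^ (i - m)) ^ (1 / r) with hZ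
          have hZ0 : 0 ≤ Z := by positivity
          calc _ = 2 * C2 * (4:ℝ) ^ (1 / r) * Z := by rw [hZ]; ring
            _ ≤ 2 * C2 * 4 * Z := by gcongr
            _ ≤ _ := by nlinarith



lemma wt_sum (ε : ℝ) (hε : 0 < ε) : (∑' n : ℤ, wt ε n) ≠ ∞ := by
  unfold wt
  apply Summable.tsum_ofReal_ne_top
  have hg : Summable fun n : ℕ => ((2:ℝ) ^ (-ε)) ^ n :=
    summable_geometric_of_lt_one (by positivity)
      (Real.rpow_lt_one_of_one_lt_of_neg (by norm_num) (by linarith))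
  have e : ∀ n : ℕ, (2 : ℝ) ^ (-(ε * (n:ℝ))) = ((2:ℝ) ^ (-ε)) ^ n := by
    intro n
    rw [← Real.rpow_natCast, ← Real.rpow_mul (by norm_num)]
    congr 1; ring
  apply Summable.of_nat_of_neg
  · refine hg.congr fun n => ?_
    simp [← e]
  · refine hg.congr fun n => ?_
    simp [← e]

lemma wt_sum_left (ε : ℝ) (T : Finset ℤ) (m : ℤ) :
    ∑ i ∈ T, wt ε (m - i) ≤ ∑' n : ℤ, wt ε n := by
  calc _ ≤ ∑' i : ℤ, wt ε (m - i) := ENNReal.sum_le_tsum T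
    _ = ∑' n : ℤ, wt ε n := (Equiv.subLeft m).tsum_eq (wt ε)

lemma wt_sum_right (ε : ℝ) (T : Finset ℤ) (i : ℤ) :
    ∑ m ∈ T, wt ε (m - i) ≤ ∑' n : ℤ, wt ε n := by
  calc _ ≤ ∑' m : ℤ, wt ε (m - i) := ENNReal.sum_le_tsum T
    _ = ∑' n : ℤ, wt ε n := (Equiv.subRight i).tsum_eq (wt ε)

lemma TT_const_mul (m : ℤ) (c : ℝ≥0∞) (h : ℝ → ℝ≥0∞) (hh : Measurable h) (x : ℝ) :
    TT m (fun y => c * h y) x = c * TT m h x := by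
  unfold TT
  rw [← lintegral_const_mul _ (kap_mul_meas m x h hh)]
  congr 1; ext y; ring

def GG (T : Finset ℤ) (f : ℤ → SchwartzMap ℝ ℂ) (m : ℤ) (x : ℝ) : ℝ≥0∞ :=
  ∑ i ∈ T, ee m i (f i) x

lemma ee_meas (m i : ℤ) (f : SchwartzMap ℝ ℂ) : Measurable (ee m i f) := by
  unfold ee
  have := f.continuous.measurable
  have := Ed_meas m f
  split_ifs <;> fun_prop

lemma GG_meas (T : Finset ℤ) (f : ℤ → SchwartzMap ℝ ℂ) (m : ℤ) : Measurable (GG T f m) := by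
  unfold GG
  exact Finset.measurable_fun_sum _ fun i _ => ee_meas m i (f i)

lemma GG_square (p Nb : ℝ) (hp : 1 < p) (hNb : 0 < Nb) : ∃ C : ℝ≥0∞, C ≠ ∞ ∧
    ∀ (f : ℤ → SchwartzMap ℝ ℂ), IsContLPFamily Nb f → ∀ S T : Finset ℤ,
    ∫⁻ x, (∑ m ∈ S, GG T f m x ^ (2:ℝ)) ^ (p / 2) ≤
      C * ∫⁻ x, (∑ i ∈ T, ‖f i x‖ₑ ^ (2:ℝ)) ^ (p / 2) := by
  obtain ⟨r, hr1, hr2⟩ := exists_between (lt_min (by norm_num : (1:ℝ) < 2) hp)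
  obtain ⟨hr2, hrp⟩ := lt_min_iff.mp hr2
  have hr0 : 0 < r := by linarith
  obtain ⟨C1, hC1, hee⟩ := ee_bound Nb hNb r hr1
  obtain ⟨C2, hC2, hst⟩ := stein (2 / r) (p / r) ((one_lt_div hr0).mpr hr2) ((one_lt_div hr0).mpr hrp)
  set ε := 1 - 1 / r with hε
  have hε0 : 0 < ε := by rw [hε, sub_pos, div_lt_one hr0]; exact hr1
  set W := ∑' n : ℤ, wt ε n with hW
  have hWt : W ≠ ∞ := wt_sum ε hε0
  have hp2 : 0 ≤ p / 2 := by linarith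
  refine ⟨(C1 ^ (2:ℝ) * W) ^ (p / 2) * (C2 * W ^ (p / 2)), ?_, ?_⟩
  · refine ENNReal.mul_ne_top ?_ (ENNReal.mul_ne_top hC2 (ENNReal.rpow_ne_top_of_nonneg hp2 hWt))
    exact ENNReal.rpow_ne_top_of_nonneg hp2 (ENNReal.mul_ne_top
      (ENNReal.rpow_ne_top_of_nonneg (by norm_num) hC1) hWt)
  intro f hf S T
  have hm : ∀ i, Measurable fun y => ‖f i y‖ₑ := fun i => (f i).continuous.enorm.measurable
  let h : ℤ × ℤ → ℝ → ℝ≥0∞ := fun z y => wt ε (z.1 - z.2) ^ (r / 2) * ‖f z.2 y‖ₑ ^ r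
  have hhm : ∀ z, Measurable (h z) := fun z => ((hm z.2).pow_const r).const_mul _
  have hq : p / r / (2 / r) = p / 2 := by field_simp
  have key := hst (ℤ × ℤ) (S ×ˢ T) (fun z => min z.1 z.2) h hhm
  rw [hq] at key
  have hexp : ∀ t : ℝ≥0∞, (t ^ (r / 2)) ^ (2 / r) = t := by
    intro t
    rw [← ENNReal.rpow_mul, show r / 2 * (2 / r) = 1 by field_simp, ENNReal.rpow_one]
  have hexp2 : ∀ t : ℝ≥0∞, (t ^ r) ^ (2 / r) = t ^ (2:ℝ) := by
    intro t
    rw [← ENNReal.rpow_mul, show r * (2 / r) = 2 by field_simp]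
  have hs0 : 0 ≤ 2 / r := by positivity
  -- pointwise bound
  have hpt : ∀ x, ∑ m ∈ S, GG T f m x ^ (2:ℝ) ≤
      C1 ^ (2:ℝ) * W * ∑ z ∈ S ×ˢ T, TT (min z.1 z.2) (h z) x ^ (2 / r) := by
    intro x
    rw [Finset.sum_product, Finset.mul_sum]
    apply Finset.sum_le_sum
    intro m _
    set U : ℤ → ℝ≥0∞ := fun i => (TT (min m i) (fun y => ‖f i y‖ₑ ^ r) x) ^ (1 / r) with hU
    have h1 : GG T f m x ≤ C1 * ∑ i ∈ T, wt ε (m - i) * U i := by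
      unfold GG
      rw [Finset.mul_sum]
      apply Finset.sum_le_sum
      intro i _
      rw [← mul_assoc]
      exact hee i m (f i) (hf i) x
    have h2 : ∑ i ∈ T, wt ε (m - i) * U i ≤
        W ^ (1 - (2:ℝ)⁻¹) * (∑ i ∈ T, wt ε (m - i) * U i ^ (2:ℝ)) ^ ((2:ℝ)⁻¹) := by
      refine (ENNReal.inner_le_weight_mul_Lp_of_nonneg T (by norm_num : (1:ℝ) ≤ 2) _ _).trans ?_
      refine mul_le_mul_left (ENNReal.rpow_le_rpow (wt_sum_left ε T m) (by norm_num)) _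
    calc GG T f m x ^ (2:ℝ) ≤ (C1 * (W ^ (1 - (2:ℝ)⁻¹) *
          (∑ i ∈ T, wt ε (m - i) * U i ^ (2:ℝ)) ^ ((2:ℝ)⁻¹))) ^ (2:ℝ) :=
          ENNReal.rpow_le_rpow (h1.trans (mul_le_mul_right h2 _)) (by norm_num)
      _ = C1 ^ (2:ℝ) * W * ∑ i ∈ T, wt ε (m - i) * U i ^ (2:ℝ) := by
          rw [ENNReal.mul_rpow_of_nonneg _ _ (by norm_num), ENNReal.mul_rpow_of_nonneg _ _ (by norm_num),
            ← ENNReal.rpow_mul, ← ENNReal.rpow_mul, ← mul_assoc]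
          norm_num
      _ = _ := by
          congr 1
          apply Finset.sum_congr rfl
          intro i _
          simp only [h]
          rw [TT_const_mul _ _ _ ((hm i).pow_const r), ENNReal.mul_rpow_of_nonneg _ _ hs0, hexp, hU]
          congr 1
          rw [← ENNReal.rpow_mul]
          congr 1
          ring
  have hpt2 : ∀ x, ∑ z ∈ S ×ˢ T, h z x ^ (2 / r) ≤ W * ∑ i ∈ T, ‖f i x‖ₑ ^ (2:ℝ) := by
    intro x
    rw [Finset.sum_product_right, Finset.mul_sum]
    apply Finset.sum_le_sum
    intro i _
    simp only [h]
    simp_rw [ENNReal.mul_rpow_of_nonneg _ _ hs0, hexp, hexp2]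
    rw [← Finset.sum_mul]
    exact mul_le_mul_left (wt_sum_right ε S i) _
  have hm1 : Measurable fun x => (∑ z ∈ S ×ˢ T, TT (min z.1 z.2) (h z) x ^ (2 / r)) ^ (p / 2) :=
    (Finset.measurable_fun_sum _ fun z _ => (TT_meas _ _ (hhm z)).pow_const _).pow_const _
  have hm2 : Measurable fun x => (∑ i ∈ T, ‖f i x‖ₑ ^ (2:ℝ)) ^ (p / 2) :=
    (Finset.measurable_fun_sum _ fun i _ => (hm i).pow_const _).pow_const _
  calc ∫⁻ x, (∑ m ∈ S, GG T f m x ^ (2:ℝ)) ^ (p / 2)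
      ≤ ∫⁻ x, (C1 ^ (2:ℝ) * W) ^ (p / 2) *
          (∑ z ∈ S ×ˢ T, TT (min z.1 z.2) (h z) x ^ (2 / r)) ^ (p / 2) := by
        apply lintegral_mono
        intro x
        beta_reduce
        rw [← ENNReal.mul_rpow_of_nonneg _ _ hp2]
        exact ENNReal.rpow_le_rpow (hpt x) hp2
    _ = (C1 ^ (2:ℝ) * W) ^ (p / 2) *
          ∫⁻ x, (∑ z ∈ S ×ˢ T, TT (min z.1 z.2) (h z) x ^ (2 / r)) ^ (p / 2) :=
        lintegral_const_mul _ hm1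
    _ ≤ (C1 ^ (2:ℝ) * W) ^ (p / 2) * (C2 * ∫⁻ x, (∑ z ∈ S ×ˢ T, h z x ^ (2 / r)) ^ (p / 2)) :=
        mul_le_mul_right key _
    _ ≤ (C1 ^ (2:ℝ) * W) ^ (p / 2) * (C2 * ∫⁻ x, W ^ (p / 2) *
          (∑ i ∈ T, ‖f i x‖ₑ ^ (2:ℝ)) ^ (p / 2)) := by
        refine mul_le_mul_right (mul_le_mul_right (lintegral_mono fun x => ?_) _) _
        beta_reduce
        rw [← ENNReal.mul_rpow_of_nonneg _ _ hp2]
        exact ENNReal.rpow_le_rpow (hpt2 x) hp2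
    _ = _ := by
        rw [lintegral_const_mul _ hm2]
        ring



lemma rpow_add_crude (u v : ℝ≥0∞) (q : ℝ) (hq : 0 ≤ q) : (u + v) ^ q ≤ 2 ^ q * (u ^ q + v ^ q) := by
  have h1 : u + v ≤ 2 * max u v := by
    rw [two_mul]; exact add_le_add (le_max_left _ _) (le_max_right _ _)
  refine (ENNReal.rpow_le_rpow h1 hq).trans ?_
  rw [ENNReal.mul_rpow_of_nonneg _ _ hq]
  refine mul_le_mul_right ?_ _
  rcases le_total u v with h | h
  · rw [max_eq_right h]; exact le_add_self
  · rw [max_eq_left h]; exact le_self_add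

lemma lint_lin (c a b : ℝ≥0∞) (u v : ℝ → ℝ≥0∞) (hu : Measurable u) (hv : Measurable v) :
    ∫⁻ x, c * (a * u x + b * v x) = c * (a * (∫⁻ x, u x) + b * ∫⁻ x, v x) := by
  have hm : Measurable fun x => a * u x + b * v x := (hu.const_mul _).add (hv.const_mul _)
  rw [lintegral_const_mul _ hm, lintegral_add_left (hu.const_mul _), lintegral_const_mul _ hu,
    lintegral_const_mul _ hv]

def FF (T : Finset ℤ) (f : ℤ → SchwartzMap ℝ ℂ) (x : ℝ) : ℂ := ∑ i ∈ T, f i x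

def PS (T : Finset ℤ) (f : ℤ → SchwartzMap ℝ ℂ) (m : ℤ) (x : ℝ) : ℂ :=
  ∑ i ∈ T, if i ≤ m then f i x else 0

lemma FF_cont (T : Finset ℤ) (f : ℤ → SchwartzMap ℝ ℂ) : Continuous (FF T f) := by
  unfold FF
  exact continuous_finsetSum _ fun i _ => (f i).continuous

lemma Ed_FF (T : Finset ℤ) (f : ℤ → SchwartzMap ℝ ℂ) (m : ℤ) (x : ℝ) :
    Ed m (FF T f) x = ∑ i ∈ T, Ed m (f i) x := by
  unfold Ed DE FF
  rw [intervalIntegral.integral_finsetSum fun i _ => (f i).continuous.intervalIntegrable _ _,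
    Finset.mul_sum]

lemma PS_approx (T : Finset ℤ) (f : ℤ → SchwartzMap ℝ ℂ) (m : ℤ) (x : ℝ) :
    ‖PS T f m x - Ed m (FF T f) x‖ₑ ≤ GG T f m x := by
  rw [Ed_FF, PS, ← Finset.sum_sub_distrib, GG]
  refine (enorm_sum_le _ _).trans (Finset.sum_le_sum fun i _ => ?_)
  unfold ee
  split_ifs
  · exact le_rfl
  · rw [zero_sub, enorm_neg]

lemma PS_step (T : Finset ℤ) (f : ℤ → SchwartzMap ℝ ℂ) (m : ℤ) (x : ℝ) :
    PS T f (m + 1) x - PS T f m x = if m + 1 ∈ T then f (m + 1) x else 0 := by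
  rw [PS, PS, ← Finset.sum_sub_distrib, ← Finset.sum_ite_eq' T (m + 1) (fun i => f i x)]
  apply Finset.sum_congr rfl
  intro i _
  by_cases h : i = m + 1
  · subst h; simp
  · by_cases h2 : i ≤ m
    · simp [h, h2, show i ≤ m + 1 by omega]
    · simp [h, h2, show ¬ i ≤ m + 1 by omega]

lemma Ed_diff (T : Finset ℤ) (f : ℤ → SchwartzMap ℝ ℂ) (m : ℤ) (x : ℝ) :
    ‖Ed (m + 1) (FF T f) x - Ed m (FF T f) x‖ₑ ≤
      GG T f (m + 1) x + GG T f m x + (if m + 1 ∈ T then ‖f (m + 1) x‖ₑ else 0) := by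
  have e : Ed (m + 1) (FF T f) x - Ed m (FF T f) x =
      -(PS T f (m + 1) x - Ed (m + 1) (FF T f) x) + (PS T f m x - Ed m (FF T f) x)
        + (PS T f (m + 1) x - PS T f m x) := by ring
  rw [e]
  refine (enorm_add_le _ _).trans (add_le_add ((enorm_add_le _ _).trans (add_le_add ?_ ?_)) ?_)
  · rw [enorm_neg]; exact PS_approx _ _ _ _
  · exact PS_approx _ _ _ _
  · rw [PS_step]; split_ifs <;> simp

lemma sum_inj_le (n : ℕ) (e : ℕ → ℤ) (he : Function.Injective e) (S : Finset ℤ)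
    (hS : ∀ j < n, e j ∈ S) (g : ℤ → ℝ≥0∞) : ∑ j ∈ Finset.range n, g (e j) ≤ ∑ m ∈ S, g m := by
  have e1 := Finset.sum_map (Finset.range n) ⟨e, he⟩ g
  simp only [Function.Embedding.coeFn_mk] at e1
  rw [← e1]
  apply Finset.sum_le_sum_of_subset
  intro m hm
  rw [Finset.mem_map] at hm
  obtain ⟨j, hj, rfl⟩ := hm
  exact hS j (Finset.mem_range.mp hj)

def dd (a : ℤ) (T : Finset ℤ) (f : ℤ → SchwartzMap ℝ ℂ) (j : ℕ) (x : ℝ) : ℂ :=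
  Ed (a + j + 1) (FF T f) x - Ed (a + j) (FF T f) x

lemma dd_meas (a : ℤ) (T : Finset ℤ) (f : ℤ → SchwartzMap ℝ ℂ) (j : ℕ) :
    Measurable (dd a T f j) := (Ed_meas _ _).sub (Ed_meas _ _)

lemma dd_square (a : ℤ) (T : Finset ℤ) (f : ℤ → SchwartzMap ℝ ℂ) (n : ℕ) (x : ℝ) :
    ∑ j ∈ Finset.range n, ‖dd a T f j x‖ₑ ^ (2:ℝ) ≤
      32 * ∑ m ∈ Finset.Icc a (a + n), GG T f m x ^ (2:ℝ) + 16 * ∑ i ∈ T, ‖f i x‖ₑ ^ (2:ℝ) := by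
  have h3 : ∀ u v w : ℝ≥0∞, (u + v + w) ^ (2:ℝ) ≤
      16 * u ^ (2:ℝ) + 16 * v ^ (2:ℝ) + 16 * w ^ (2:ℝ) := by
    intro u v w
    have a1 := rpow_add_crude (u + v) w 2 (by norm_num)
    have a2 := rpow_add_crude u v 2 (by norm_num)
    have e4 : (2:ℝ≥0∞) ^ (2:ℝ) = 4 := by
      rw [show (2:ℝ) = ((2:ℕ):ℝ) by norm_num, ENNReal.rpow_natCast]; norm_num
    rw [e4] at a1 a2
    calc _ ≤ 4 * (4 * (u ^ (2:ℝ) + v ^ (2:ℝ)) + w ^ (2:ℝ)) :=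
          a1.trans (mul_le_mul_right (add_le_add_left a2 _) _)
      _ = 16 * u ^ (2:ℝ) + 16 * v ^ (2:ℝ) + 4 * w ^ (2:ℝ) := by ring
      _ ≤ _ := by gcongr; norm_num
  have hterm : ∀ j : ℕ, ‖dd a T f j x‖ₑ ^ (2:ℝ) ≤ 16 * GG T f (a + j + 1) x ^ (2:ℝ) +
      16 * GG T f (a + j) x ^ (2:ℝ) + 16 * (if a + j + 1 ∈ T then ‖f (a + j + 1) x‖ₑ ^ (2:ℝ) else 0) := by
    intro j
    refine (ENNReal.rpow_le_rpow (Ed_diff T f (a + j) x) (by norm_num)).trans ((h3 _ _ _).trans ?_)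
    gcongr
    split_ifs <;> simp
  refine (Finset.sum_le_sum fun j _ => hterm j).trans ?_
  rw [Finset.sum_add_distrib, Finset.sum_add_distrib, ← Finset.mul_sum, ← Finset.mul_sum,
    ← Finset.mul_sum]
  have b1 := sum_inj_le n (fun j => a + j + 1) (fun i j h => by simpa using h)
    (Finset.Icc a (a + n)) (fun j hj => by rw [Finset.mem_Icc]; omega) (fun m => GG T f m x ^ (2:ℝ))
  have b2 := sum_inj_le n (fun j => a + j) (fun i j h => by simpa using h)
    (Finset.Icc a (a + n)) (fun j hj => by rw [Finset.mem_Icc]; omega) (fun m => GG T f m x ^ (2:ℝ))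
  have b3 := sum_inj_le n (fun j => a + j + 1) (fun i j h => by simpa using h)
    (Finset.Icc a (a + n) ∪ T) (fun j hj => by rw [Finset.mem_union, Finset.mem_Icc]; left; omega)
    (fun m => if m ∈ T then ‖f m x‖ₑ ^ (2:ℝ) else 0)
  rw [Finset.sum_ite_mem, Finset.union_inter_cancel_right] at b3
  calc _ ≤ 16 * ∑ m ∈ Finset.Icc a (a + n), GG T f m x ^ (2:ℝ) +
        16 * ∑ m ∈ Finset.Icc a (a + n), GG T f m x ^ (2:ℝ) + 16 * ∑ i ∈ T, ‖f i x‖ₑ ^ (2:ℝ) :=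
        add_le_add (add_le_add (mul_le_mul_right b1 _) (mul_le_mul_right b2 _))
          (mul_le_mul_right b3 _)
    _ = _ := by ring

lemma mart_all (q : ℝ) (hq : 0 < q) : ∃ C : ℝ≥0∞, C ≠ ∞ ∧ ∀ (a : ℤ) (T : Finset ℤ)
    (f : ℤ → SchwartzMap ℝ ℂ) (θ : ℝ) (n : ℕ),
    ∫⁻ x, ENNReal.ofReal (gY θ (fun i => dd a T f i x) n) ^ q ≤
      C * ∫⁻ x, (∑ j ∈ Finset.range n, ‖dd a T f j x‖ₑ ^ (2:ℝ)) ^ q := by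
  have hconv : ∀ (a : ℤ) (T : Finset ℤ) (f : ℤ → SchwartzMap ℝ ℂ) (n : ℕ) (x : ℝ),
      ENNReal.ofReal (gs (fun i => dd a T f i x) n ^ q) =
        (∑ j ∈ Finset.range n, ‖dd a T f j x‖ₑ ^ (2:ℝ)) ^ q := by
    intro a T f n x
    rw [← ENNReal.ofReal_rpow_of_nonneg (gs_nonneg _ _) hq.le, gs,
      ENNReal.ofReal_sum_of_nonneg fun i _ => by positivity]
    congr 1
    apply Finset.sum_congr rfl
    intro i _
    rw [← ofReal_norm, ENNReal.ofReal_rpow_of_nonneg (norm_nonneg _) (by norm_num), Real.rpow_two]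
  have h1 : ∀ (a : ℤ) (T : Finset ℤ) (f : ℤ → SchwartzMap ℝ ℂ) (j i : ℕ) (x : ℝ), i < j →
      dd a T f i (sw (a + j) x) = dd a T f i x := by
    intro a T f j i x hij
    unfold dd
    rw [sw_Ed _ _ (by omega), sw_Ed _ _ (by omega)]
  have h2 : ∀ (a : ℤ) (T : Finset ℤ) (f : ℤ → SchwartzMap ℝ ℂ) (j : ℕ) (x : ℝ),
      dd a T f j (sw (a + j) x) = - dd a T f j x := by
    intro a T f j x
    have := sw_Ed_add (a + j) (FF T f) (FF_cont T f) x
    unfold dd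
    rw [sw_Ed (a + j) (a + j) le_rfl]
    linear_combination this
  rcases le_total q 1 with h | h
  · refine ⟨ENNReal.ofReal ((1 / q) ^ q), ENNReal.ofReal_ne_top, fun a T f θ n => ?_⟩
    have := mart_small (μ := volume) (dd a T f) (dd_meas a T f) (fun j => sw (a + j))
      (fun j => sw_mp _) (h1 a T f) (h2 a T f) θ q hq h n
    simp_rw [hconv] at this
    simp_rw [ENNReal.ofReal_rpow_of_nonneg (gY_nonneg _ _ _) hq.le]
    exact this
  · refine ⟨ENNReal.ofReal (cE q * 2 ^ (q - 1)) ^ q,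
      ENNReal.rpow_ne_top_of_nonneg hq.le ENNReal.ofReal_ne_top, fun a T f θ n => ?_⟩
    have := mart_large (μ := volume) (dd a T f) (dd_meas a T f) (fun j => sw (a + j))
      (fun j => sw_mp _) (h1 a T f) (h2 a T f) θ q h n
    simp_rw [hconv] at this
    simp_rw [ENNReal.ofReal_rpow_of_nonneg (gY_nonneg _ _ _) hq.le]
    exact this

/-- the control quantity -/
def QQ (a : ℤ) (n : ℕ) (T : Finset ℤ) (f : ℤ → SchwartzMap ℝ ℂ) (θ : ℝ) (x : ℝ) : ℝ≥0∞ :=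
  36 * ENNReal.ofReal (gY θ (fun i => dd a T f i x) n) +
    18 * ∑ m ∈ Finset.Icc a (a + n), GG T f m x ^ (2:ℝ)

lemma QQ_meas (a : ℤ) (n : ℕ) (T : Finset ℤ) (f : ℤ → SchwartzMap ℝ ℂ) (θ : ℝ) :
    Measurable (QQ a n T f θ) := by
  unfold QQ
  exact ((gY_meas _ (dd_meas a T f) θ n).ennreal_ofReal.const_mul _).add
    ((Finset.measurable_fun_sum _ fun m _ => (GG_meas T f m).pow_const _).const_mul _)

lemma QQ_bound (p Nb : ℝ) (hp : 1 < p) (hNb : 0 < Nb) : ∃ C : ℝ≥0∞, C ≠ ∞ ∧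
    ∀ (f : ℤ → SchwartzMap ℝ ℂ), IsContLPFamily Nb f → ∀ (a : ℤ) (n : ℕ) (T : Finset ℤ) (θ : ℝ),
    ∫⁻ x, QQ a n T f θ x ^ (p / 2) ≤ C * ∫⁻ x, (∑ i ∈ T, ‖f i x‖ₑ ^ (2:ℝ)) ^ (p / 2) := by
  have hq : 0 < p / 2 := by linarith
  set q := p / 2 with hqq
  obtain ⟨C1, hC1, hG⟩ := GG_square p Nb hp hNb
  obtain ⟨C2, hC2, hM⟩ := mart_all q hq
  have fin : ∀ c : ℝ≥0∞, c ≠ ∞ → c ^ q ≠ ∞ := fun c hc => ENNReal.rpow_ne_top_of_nonneg hq.le hc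
  refine ⟨2 ^ q * (36 ^ q * (C2 * (2 ^ q * (32 ^ q * C1 + 16 ^ q))) + 18 ^ q * C1), ?_, ?_⟩
  · have := fin 2 (by norm_num)
    have := fin 36 (by norm_num)
    have := fin 32 (by norm_num)
    have := fin 16 (by norm_num)
    have := fin 18 (by norm_num)
    finiteness
  intro f hf a n T θ
  have hGG := hG f hf (Finset.Icc a (a + n)) T
  have hMM := hM a T f θ n
  set R := ∫⁻ x, (∑ i ∈ T, ‖f i x‖ₑ ^ (2:ℝ)) ^ q with hR
  have hm1 : Measurable fun x => (∑ m ∈ Finset.Icc a (a + n), GG T f m x ^ (2:ℝ)) ^ q :=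
    (Finset.measurable_fun_sum _ fun m _ => (GG_meas T f m).pow_const _).pow_const _
  have hm2 : Measurable fun x => ENNReal.ofReal (gY θ (fun i => dd a T f i x) n) ^ q :=
    (gY_meas _ (dd_meas a T f) θ n).ennreal_ofReal.pow_const _
  have hm3 : Measurable fun x => (∑ i ∈ T, ‖f i x‖ₑ ^ (2:ℝ)) ^ q :=
    (Finset.measurable_fun_sum _ fun i _ => ((f i).continuous.enorm.measurable).pow_const _).pow_const _
  have hD : ∫⁻ x, (∑ j ∈ Finset.range n, ‖dd a T f j x‖ₑ ^ (2:ℝ)) ^ q ≤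
      2 ^ q * (32 ^ q * (C1 * R) + 16 ^ q * R) := by
    calc _ ≤ ∫⁻ x, 2 ^ q * (32 ^ q * (∑ m ∈ Finset.Icc a (a + n), GG T f m x ^ (2:ℝ)) ^ q +
            16 ^ q * (∑ i ∈ T, ‖f i x‖ₑ ^ (2:ℝ)) ^ q) := by
          apply lintegral_mono
          intro x
          beta_reduce
          refine (ENNReal.rpow_le_rpow (dd_square a T f n x) hq.le).trans
            ((rpow_add_crude _ _ q hq.le).trans (le_of_eq ?_))
          rw [ENNReal.mul_rpow_of_nonneg _ _ hq.le, ENNReal.mul_rpow_of_nonneg _ _ hq.le]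
      _ = 2 ^ q * (32 ^ q * (∫⁻ x, (∑ m ∈ Finset.Icc a (a + n), GG T f m x ^ (2:ℝ)) ^ q) +
            16 ^ q * R) := by
          rw [lint_lin _ _ _ _ _ hm1 hm3]
      _ ≤ _ := mul_le_mul_right (add_le_add_left (mul_le_mul_right hGG _) _) _
  calc _ ≤ ∫⁻ x, 2 ^ q * (36 ^ q * ENNReal.ofReal (gY θ (fun i => dd a T f i x) n) ^ q +
            18 ^ q * (∑ m ∈ Finset.Icc a (a + n), GG T f m x ^ (2:ℝ)) ^ q) := by
          apply lintegral_mono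
          intro x
          beta_reduce
          refine (rpow_add_crude _ _ q hq.le).trans (le_of_eq ?_)
          rw [ENNReal.mul_rpow_of_nonneg _ _ hq.le, ENNReal.mul_rpow_of_nonneg _ _ hq.le]
      _ = 2 ^ q * (36 ^ q * (∫⁻ x, ENNReal.ofReal (gY θ (fun i => dd a T f i x) n) ^ q) +
            18 ^ q * ∫⁻ x, (∑ m ∈ Finset.Icc a (a + n), GG T f m x ^ (2:ℝ)) ^ q) := by
          rw [lint_lin _ _ _ _ _ hm2 hm1]
      _ ≤ 2 ^ q * (36 ^ q * (C2 * (2 ^ q * (32 ^ q * (C1 * R) + 16 ^ q * R))) +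
            18 ^ q * (C1 * R)) :=
          mul_le_mul_right (add_le_add (mul_le_mul_right (hMM.trans (mul_le_mul_right hD _)) _)
            (mul_le_mul_right hGG _)) _
      _ = _ := by ring



lemma PS_eq (a : ℤ) (n : ℕ) (f : ℤ → SchwartzMap ℝ ℂ) (m m' : ℤ) (x : ℝ) (h1 : a ≤ m)
    (h2 : m ≤ m') (h3 : m' ≤ a + n) :
    ∑ i ∈ Finset.Ioc m m', f i x =
      PS (Finset.Ioc a (a + n)) f m' x - PS (Finset.Ioc a (a + n)) f m x := by
  rw [PS, PS, ← Finset.sum_sub_distrib]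
  have hsub : Finset.Ioc m m' ⊆ Finset.Ioc a (a + n) := by
    intro i hi
    rw [Finset.mem_Ioc] at hi ⊢
    omega
  rw [← Finset.sum_subset hsub (f := fun i => (if i ≤ m' then f i x else 0) - (if i ≤ m then f i x else 0))]
  · apply Finset.sum_congr rfl
    intro i hi
    rw [Finset.mem_Ioc] at hi
    rw [if_pos hi.2, if_neg (by omega), sub_zero]
  · intro i _ hi
    rw [Finset.mem_Ioc] at hi
    by_cases h : i ≤ m
    · rw [if_pos h, if_pos (by omega), sub_self]
    · rw [if_neg h, if_neg (by omega), sub_zero]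

lemma dd_tele (a : ℤ) (T : Finset ℤ) (f : ℤ → SchwartzMap ℝ ℂ) (x : ℝ) (u v : ℕ) (h : u ≤ v) :
    ∑ i ∈ Finset.Ico u v, dd a T f i x = Ed (a + v) (FF T f) x - Ed (a + u) (FF T f) x := by
  induction v, h using Nat.le_induction with
  | base => simp
  | succ v hv ih =>
    rw [Finset.sum_Ico_succ_top hv, ih, dd]
    push_cast
    rw [← add_assoc]
    ring

lemma count_err (lam : ℝ) (hlam : 0 < lam) (J : Finset ℕ) (e : ℕ → ℤ)
    (he : Set.InjOn e J) (S : Finset ℤ) (hS : ∀ k ∈ J, e k ∈ S) (g : ℤ → ℝ≥0∞)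
    (hg : ∀ k ∈ J, ENNReal.ofReal (lam / 3) ≤ g (e k)) :
    ENNReal.ofReal (lam ^ 2) * (J.card : ℝ≥0∞) ≤ 9 * ∑ m ∈ S, g m ^ (2:ℝ) := by
  have h1 : ∑ k ∈ J, g (e k) ^ (2:ℝ) ≤ ∑ m ∈ S, g m ^ (2:ℝ) := by
    rw [← Finset.sum_image (f := fun m => g m ^ (2:ℝ)) he]
    apply Finset.sum_le_sum_of_subset
    intro m hm
    rw [Finset.mem_image] at hm
    obtain ⟨k, hk, rfl⟩ := hm
    exact hS k hk
  have h2 : (J.card : ℝ≥0∞) * ENNReal.ofReal (lam / 3) ^ (2:ℝ) ≤ ∑ k ∈ J, g (e k) ^ (2:ℝ) := by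
    rw [← nsmul_eq_mul]
    apply Finset.card_nsmul_le_sum
    intro k hk
    exact ENNReal.rpow_le_rpow (hg k hk) (by norm_num)
  calc _ = 9 * ((J.card : ℝ≥0∞) * ENNReal.ofReal (lam / 3) ^ (2:ℝ)) := by
        rw [ENNReal.ofReal_rpow_of_nonneg (by positivity) (by norm_num), Real.rpow_two]
        have : lam ^ 2 = 9 * (lam / 3) ^ 2 := by ring
        rw [this, ENNReal.ofReal_mul (by norm_num), ENNReal.ofReal_ofNat]
        ring
    _ ≤ _ := mul_le_mul_right (h2.trans h1) _

lemma jump_count (a : ℤ) (n : ℕ) (f : ℤ → SchwartzMap ℝ ℂ) (lam : ℝ) (hlam : 0 < lam) (x : ℝ)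
    (N : ℕ → ℤ) (hN : Monotone N) (J : Finset ℕ)
    (hJ : ∀ k ∈ J, a ≤ N k ∧ N (k + 1) ≤ a + n ∧ lam < ‖∑ i ∈ Finset.Ioc (N k) (N (k + 1)), f i x‖) :
    ENNReal.ofReal (lam ^ 2) * (J.card : ℝ≥0∞) ≤
      QQ a n (Finset.Ioc a (a + n)) f (lam / 6) x := by
  classical
  set T := Finset.Ioc a (a + n) with hT
  set M : ℤ → ℂ := fun m => Ed m (FF T f) x with hM
  set A : ℤ → ℂ := fun m => PS T f m x with hA
  have hstrict : ∀ k ∈ J, N k < N (k + 1) := by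
    intro k hk
    by_contra hcon
    have := (hJ k hk).2.2
    rw [Finset.Ioc_eq_empty hcon] at this
    simp at this
    linarith
  have hinj1 : Set.InjOn N J := by
    intro k hk l hl hkl
    by_contra hne
    rcases lt_or_gt_of_ne hne with h | h
    · have := hstrict k hk
      have := hN (Nat.succ_le_of_lt h)
      simp only [Nat.succ_eq_add_one] at this
      omega
    · have := hstrict l hl
      have := hN (Nat.succ_le_of_lt h)
      simp only [Nat.succ_eq_add_one] at this
      omega
  have hinj2 : Set.InjOn (fun k => N (k + 1)) J := by
    intro k hk l hl hkl
    simp only at hkl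
    by_contra hne
    rcases lt_or_gt_of_ne hne with h | h
    · have := hstrict l hl
      have := hN (Nat.succ_le_of_lt h)
      simp only [Nat.succ_eq_add_one] at this
      omega
    · have := hstrict k hk
      have := hN (Nat.succ_le_of_lt h)
      simp only [Nat.succ_eq_add_one] at this
      omega
  set J1 := J.filter fun k => lam / 3 < ‖M (N (k + 1)) - M (N k)‖ with hJ1
  set J2 := J.filter fun k => lam / 3 ≤ ‖A (N k) - M (N k)‖ with hJ2
  set J3 := J.filter fun k => lam / 3 ≤ ‖A (N (k + 1)) - M (N (k + 1))‖ with hJ3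
  have hcover : J ⊆ J1 ∪ (J2 ∪ J3) := by
    intro k hk
    by_contra hcon
    simp only [Finset.mem_union, hJ1, hJ2, hJ3, Finset.mem_filter, hk, true_and, not_or, not_lt,
      not_le] at hcon
    obtain ⟨c1, c2, c3⟩ := hcon
    obtain ⟨h1, h2, h3⟩ := hJ k hk
    rw [PS_eq a n f _ _ x h1 (hstrict k hk).le h2] at h3
    have e : A (N (k + 1)) - A (N k) = (A (N (k + 1)) - M (N (k + 1))) +
        (M (N (k + 1)) - M (N k)) - (A (N k) - M (N k)) := by ring
    have h4 : ‖A (N (k + 1)) - A (N k)‖ ≤ ‖A (N (k + 1)) - M (N (k + 1))‖ +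
        ‖M (N (k + 1)) - M (N k)‖ + ‖A (N k) - M (N k)‖ := by
      rw [e]
      exact (norm_sub_le _ _).trans (add_le_add (norm_add_le _ _) le_rfl)
    have h5 : lam < ‖A (N (k + 1)) - A (N k)‖ := h3
    linarith
  have hcard : (J.card : ℝ≥0∞) ≤ J1.card + (J2.card + J3.card) := by
    have : J.card ≤ J1.card + (J2.card + J3.card) :=
      (Finset.card_le_card hcover).trans ((Finset.card_union_le _ _).trans
        (Nat.add_le_add_left (Finset.card_union_le _ _) _))
    exact_mod_cast this
  -- martingale jumps
  have b1 : ENNReal.ofReal (lam ^ 2) * (J1.card : ℝ≥0∞) ≤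
      36 * ENNReal.ofReal (gY (lam / 6) (fun i => dd a T f i x) n) := by
    have := gst_count (lam / 6) (by positivity) (fun i => dd a T f i x) n
      (fun k => min n (N k - a).toNat) (fun k l hkl => by
        have := hN hkl
        simp only
        omega) (fun k => min_le_left _ _) J1 (fun k hk => by
        rw [hJ1, Finset.mem_filter] at hk
        obtain ⟨hk, hk2⟩ := hk
        obtain ⟨h1, h2, _⟩ := hJ k hk
        have h3 := hstrict k hk
        rw [dd_tele _ _ _ _ _ _ (by omega)]
        have e1 : a + ((min n (N (k + 1) - a).toNat : ℕ) : ℤ) = N (k + 1) := by omega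
        have e2 : a + ((min n (N k - a).toNat : ℕ) : ℤ) = N k := by omega
        rw [e1, e2]
        linarith)
    calc _ = ENNReal.ofReal (36 * ((lam / 6) ^ 2 * (J1.card : ℝ))) := by
          rw [← ENNReal.ofReal_natCast, ← ENNReal.ofReal_mul (by positivity)]
          congr 1; ring
      _ ≤ ENNReal.ofReal (36 * gY (lam / 6) (fun i => dd a T f i x) n) := by
          apply ENNReal.ofReal_le_ofReal; linarith
      _ = _ := by rw [ENNReal.ofReal_mul (by norm_num), ENNReal.ofReal_ofNat]
  have hAM : ∀ m, lam / 3 ≤ ‖A m - M m‖ → ENNReal.ofReal (lam / 3) ≤ GG T f m x := by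
    intro m hm
    refine le_trans ?_ (PS_approx T f m x)
    rw [← ofReal_norm]
    exact ENNReal.ofReal_le_ofReal hm
  have b2 := count_err lam hlam J2 N (hinj1.mono fun k hk => (Finset.mem_filter.mp hk).1) (Finset.Icc a (a + n))
    (fun k hk => by
      rw [hJ2, Finset.mem_filter] at hk
      obtain ⟨h1, h2, _⟩ := hJ k hk.1
      have h3 := hstrict k hk.1
      rw [Finset.mem_Icc]; omega) (fun m => GG T f m x) (fun k hk => by
      rw [hJ2, Finset.mem_filter] at hk
      exact hAM _ hk.2)
  have b3 := count_err lam hlam J3 (fun k => N (k + 1)) (hinj2.mono fun k hk => (Finset.mem_filter.mp hk).1)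
    (Finset.Icc a (a + n))
    (fun k hk => by
      rw [hJ3, Finset.mem_filter] at hk
      obtain ⟨h1, h2, _⟩ := hJ k hk.1
      have h3 := hstrict k hk.1
      rw [Finset.mem_Icc]; omega) (fun m => GG T f m x) (fun k hk => by
      rw [hJ3, Finset.mem_filter] at hk
      exact hAM _ hk.2)
  calc _ ≤ ENNReal.ofReal (lam ^ 2) * ((J1.card : ℝ≥0∞) + (J2.card + J3.card)) :=
        mul_le_mul_right hcard _
    _ = ENNReal.ofReal (lam ^ 2) * (J1.card : ℝ≥0∞) + (ENNReal.ofReal (lam ^ 2) * J2.card +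
          ENNReal.ofReal (lam ^ 2) * J3.card) := by ring
    _ ≤ _ := add_le_add b1 (add_le_add b2 b3)
    _ = _ := by unfold QQ; ring

lemma encard_sup (v X : ℝ≥0∞) (hv : v ≠ 0) (K : Set ℕ)
    (h : ∀ J : Finset ℕ, (J : Set ℕ) ⊆ K → v * (J.card : ℝ≥0∞) ≤ X) :
    v * (K.encard : ℝ≥0∞) ≤ X := by
  by_cases hK : K.Finite
  · have := h hK.toFinset (by simp)
    rw [hK.encard_eq_coe_toFinset_card]
    simpa using this
  · have hX : X = ∞ := by
      rw [eq_top_iff]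
      calc ∞ = v * ⨆ n : ℕ, (n : ℝ≥0∞) := by rw [ENNReal.iSup_natCast, ENNReal.mul_top hv]
        _ = ⨆ n : ℕ, v * (n : ℝ≥0∞) := ENNReal.mul_iSup ..
        _ ≤ X := iSup_le fun n => by
            obtain ⟨J, hJ, hc⟩ := Set.Infinite.exists_subset_card_eq hK n
            rw [← hc]
            exact h J hJ
    rw [hX]; exact le_top

lemma jump_main (p Nb : ℝ) (hp : 1 < p) (hNb : 0 < Nb) : ∃ C : ℝ≥0∞, C ≠ ∞ ∧
    ∀ (f : ℤ → SchwartzMap ℝ ℂ), IsContLPFamily Nb f →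
    ∀ (Nk : ℕ → ℝ → ℤ), IsJumpCollection Nk → ∀ lam : ℝ, 0 < lam →
    ∫⁻ x, (ENNReal.ofReal (lam ^ 2) * (({k : ℕ | lam <
      ‖∑ i ∈ Finset.Ioc (Nk k x) (Nk (k + 1) x), f i x‖}.encard : ℝ≥0∞))) ^ (p / 2) ≤
      C * ∫⁻ x, (∑' i : ℤ, ‖f i x‖ₑ ^ (2:ℝ)) ^ (p / 2) := by
  obtain ⟨C, hC, h⟩ := QQ_bound p Nb hp hNb
  refine ⟨C, hC, fun f hf Nk hNk lam hlam => ?_⟩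
  have hq : 0 < p / 2 := by linarith
  set Q : ℕ → ℝ → ℝ≥0∞ := fun L x =>
    QQ (-(L:ℤ)) (2 * L) (Finset.Ioc (-(L:ℤ)) (-(L:ℤ) + (2 * L : ℕ))) f (lam / 6) x ^ (p / 2) with hQ
  have hpt : ∀ x, (ENNReal.ofReal (lam ^ 2) * (({k : ℕ | lam <
      ‖∑ i ∈ Finset.Ioc (Nk k x) (Nk (k + 1) x), f i x‖}.encard : ℝ≥0∞))) ^ (p / 2) ≤
      Filter.liminf (fun L => Q L x) Filter.atTop := by
    intro x
    have hmon : Monotone fun k => Nk k x := monotone_nat_of_le_succ fun k => hNk.2 k x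
    rw [← ENNReal.le_rpow_inv_iff hq]
    apply encard_sup
    · simp [hlam.ne']
    intro J hJ
    rw [ENNReal.le_rpow_inv_iff hq]
    apply Filter.le_liminf_of_le
    · isBoundedDefault
    obtain ⟨L0, hL0⟩ : ∃ L0 : ℕ, ∀ k ∈ J, |Nk k x| ≤ L0 ∧ |Nk (k + 1) x| ≤ L0 := by
      refine ⟨∑ k ∈ J, ((Nk k x).natAbs + (Nk (k + 1) x).natAbs), fun k hk => ?_⟩
      have := Finset.single_le_sum (f := fun k => (Nk k x).natAbs + (Nk (k + 1) x).natAbs)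
        (fun _ _ => Nat.zero_le _) hk
      rw [Int.abs_eq_natAbs, Int.abs_eq_natAbs]
      omega
    filter_upwards [Filter.eventually_ge_atTop L0] with L hL
    apply ENNReal.rpow_le_rpow _ hq.le
    apply jump_count _ _ f lam hlam x (fun k => Nk k x) hmon J
    intro k hk
    obtain ⟨g1, g2⟩ := hL0 k hk
    rw [abs_le] at g1 g2
    refine ⟨by omega, by push_cast; omega, hJ hk⟩
  calc _ ≤ ∫⁻ x, Filter.liminf (fun L => Q L x) Filter.atTop := lintegral_mono hpt
    _ ≤ Filter.liminf (fun L => ∫⁻ x, Q L x) Filter.atTop :=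
        lintegral_liminf_le fun L => (QQ_meas _ _ _ _ _).pow_const _
    _ ≤ C * ∫⁻ x, (∑' i : ℤ, ‖f i x‖ₑ ^ (2:ℝ)) ^ (p / 2) := by
        apply Filter.liminf_le_of_le
        · isBoundedDefault
        intro b hb
        obtain ⟨L, hL⟩ := hb.exists
        refine hL.trans ((h f hf _ _ _ _).trans (mul_le_mul_right (lintegral_mono fun x => ?_) _))
        exact ENNReal.rpow_le_rpow (ENNReal.sum_le_tsum _) hq.le

/-- Weak-type (jump counting) variational inequality at `r = t = 2`, continuous case. -/
theorem continuous_weak_jump_inequality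
    (p Nb : ℝ) (hp : 1 < p) (hNb : 0 < Nb) :
    ∃ C : ℝ≥0, 0 < C ∧
      ∀ (f : ℤ → SchwartzMap ℝ ℂ), IsContLPFamily Nb f →
      ∀ (Nk : ℕ → ℝ → ℤ), IsJumpCollection Nk →
      ∀ lam : ℝ, 0 < lam →
      (∫⁻ x : ℝ,
          (ENNReal.ofReal lam *
            (({k : ℕ | lam <
                ‖∑ i ∈ Finset.Ioc (Nk k x) (Nk (k + 1) x), f i x‖}.encard : ℝ≥0∞))
              ^ ((1 : ℝ) / 2)) ^ p) ^ (1 / p)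
        ≤ (C : ℝ≥0∞) *
      (∫⁻ x : ℝ,
          ((∑' i : ℤ, (ENNReal.ofReal ‖f i x‖) ^ (2 : ℝ)) ^ ((1 : ℝ) / 2)) ^ p)
            ^ (1 / p) := by
  obtain ⟨C, hC, h⟩ := jump_main p Nb hp hNb
  have hp0 : 0 < p := by linarith
  have hip : 0 ≤ 1 / p := by positivity
  have hD : C ^ (1 / p) ≠ ∞ := ENNReal.rpow_ne_top_of_nonneg hip hC
  refine ⟨(C ^ (1 / p)).toNNReal + 1, by positivity, fun f hf Nk hNk lam hlam => ?_⟩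
  have e1 : ∀ E : ℝ≥0∞, (ENNReal.ofReal lam * E ^ ((1:ℝ) / 2)) ^ p =
      (ENNReal.ofReal (lam ^ 2) * E) ^ (p / 2) := by
    intro E
    rw [ENNReal.mul_rpow_of_nonneg _ _ hp0.le, ENNReal.mul_rpow_of_nonneg _ _ (by positivity),
      ← ENNReal.rpow_mul, ← Real.rpow_two, ← ENNReal.ofReal_rpow_of_nonneg hlam.le (by norm_num),
      ← ENNReal.rpow_mul]
    congr 2 <;> ring
  have e2 : ∀ E : ℝ≥0∞, (E ^ ((1:ℝ) / 2)) ^ p = E ^ (p / 2) := by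
    intro E
    rw [← ENNReal.rpow_mul]
    congr 1; ring
  simp_rw [e1, e2, ofReal_norm]
  refine (ENNReal.rpow_le_rpow (h f hf Nk hNk lam hlam) hip).trans ?_
  rw [ENNReal.mul_rpow_of_nonneg _ _ hip]
  refine mul_le_mul_left ?_ _
  rw [ENNReal.coe_add, ENNReal.coe_toNNReal hD]
  exact le_self_add

end
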